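/- arXiv:2403.18678 — 9 statements merged into one kernel-verified Lean document; each statement's English description precedes it below -/
import Mathlib

section
/- Let X be an infinite-dimensional separable Banach space over 𝕂 ∈ {ℝ, ℂ}. Then the set of supercyclic operators in L(X) is spaceable: there exists an infinite-dimensional closed linear subspace M of L(X) (with the operator norm) such that every nonzero operator T ∈ M is supercyclic. -/
open Filter Topology

/-- A continuous linear operator `U` on a normed space `Y` over `𝕜` is *supercyclic* if
there is a vector `y` whose projective orbit `{c • Uᵏ y : c ∈ 𝕜, k ≥ 0}` is dense in `Y`. -/
def Supercyclic {𝕜 : Type*} [RCLike 𝕜] {Y : Type*} [NormedAddCommGroup Y]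
    [NormedSpace 𝕜 Y] (U : Y →L[𝕜] Y) : Prop :=
  ∃ y : Y, Dense {z : Y | ∃ (c : 𝕜) (k : ℕ), z = c • (U ^ k) y}

theorem supercyclic_of_dense {𝕜 : Type*} [RCLike 𝕜] {X : Type*} [NormedAddCommGroup X]
    [NormedSpace 𝕜 X] [CompleteSpace X] [TopologicalSpace.SeparableSpace X] (T : X →L[𝕜] X)
    (hk : Dense {x : X | ∃ n, (T ^ n) x = 0}) (hr : DenseRange T) : Supercyclic T := by
  have : SecondCountableTopology X := UniformSpace.secondCountable_of_separable X
  have hpow : ∀ n : ℕ, DenseRange (T ^ n : X →L[𝕜] X) := by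
    intro n
    induction n with
    | zero => exact Function.Surjective.denseRange (fun x => ⟨x, rfl⟩)
    | succ n ih =>
      have : ((T ^ (n+1) : X →L[𝕜] X) : X → X) = T ∘ (T ^ n : X →L[𝕜] X) := by
        rw [pow_succ']; rfl
      rw [this]
      exact hr.comp ih T.continuous
  have hnil : ∀ (x : X) (n : ℕ), (T ^ n) x = 0 → ∀ m, n ≤ m → (T ^ m) x = 0 := by
    intro x n h m hm
    obtain ⟨k, rfl⟩ := Nat.exists_eq_add_of_le' hm
    rw [pow_add, mul_apply_eq_comp, h, map_zero]
  let B := TopologicalSpace.countableBasis X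
  let G : Set X → Set X := fun V => ⋃ (c : 𝕜) (k : ℕ), (fun y => c • (T ^ k) y) ⁻¹' V
  have hcont : ∀ (c : 𝕜) (k : ℕ), Continuous (fun y : X => c • (T ^ k) y) := fun c k =>
    (T ^ k).continuous.const_smul c
  have hd : Dense (⋂ V ∈ B, G V) := by
    refine dense_biInter_of_isOpen ?_ (TopologicalSpace.countable_countableBasis X) ?_
    · intro V hV
      exact isOpen_iUnion fun c => isOpen_iUnion fun k =>
        (TopologicalSpace.isOpen_of_mem_countableBasis hV).preimage (hcont c k)
    · intro V hV
      have hVo := TopologicalSpace.isOpen_of_mem_countableBasis hV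
      have hVn := TopologicalSpace.nonempty_of_mem_countableBasis hV
      rw [dense_iff_inter_open]
      intro U hU hUn
      obtain ⟨x, hxU, n, hn⟩ := hk.inter_open_nonempty U hU hUn
      obtain ⟨v, hvV, z, rfl⟩ := (hpow n).inter_open_nonempty V hVo hVn
      have hc : Continuous (fun ε : 𝕜 => x + ε • z) := by fun_prop
      have hev : ∀ᶠ ε in 𝓝[≠] (0 : 𝕜), x + ε • z ∈ U := by
        apply nhdsWithin_le_nhds
        apply hc.continuousAt.eventually
        apply hU.mem_nhds
        simpa using hxU
      obtain ⟨ε, hε, hε0⟩ := (hev.and self_mem_nhdsWithin).exists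
      refine ⟨x + ε • z, hε, ?_⟩
      simp only [G, Set.mem_iUnion, Set.mem_preimage]
      refine ⟨ε⁻¹, n, ?_⟩
      rw [map_add, hn, zero_add, map_smul, smul_smul, inv_mul_cancel₀ hε0, one_smul]
      exact hvV
  obtain ⟨y, hy⟩ := hd.nonempty
  refine ⟨y, ?_⟩
  rw [(TopologicalSpace.isBasis_countableBasis X).dense_iff]
  intro V hV hVn
  have := Set.mem_iInter₂.1 hy V hV
  simp only [G, Set.mem_iUnion, Set.mem_preimage] at this
  obtain ⟨c, k, h⟩ := this
  exact ⟨_, h, c, k, rfl⟩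

theorem exists_li_dense {𝕜 : Type*} [RCLike 𝕜] {X : Type*} [NormedAddCommGroup X]
    [NormedSpace 𝕜 X] [TopologicalSpace.SeparableSpace X]
    (hinf : ¬ FiniteDimensional 𝕜 X) :
    ∃ e : ℕ → X, LinearIndependent 𝕜 e ∧
      Dense ((Submodule.span 𝕜 (Set.range e) : Submodule 𝕜 X) : Set X) := by
  obtain ⟨s, hs, hsd⟩ := TopologicalSpace.exists_countable_dense X
  obtain ⟨b, hb, hspan, hli⟩ := exists_linearIndependent 𝕜 s
  have hd : Dense ((Submodule.span 𝕜 b : Submodule 𝕜 X) : Set X) := by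
    rw [hspan]; exact hsd.mono Submodule.subset_span
  have hbi : b.Infinite := by
    intro hf
    apply hinf
    have : FiniteDimensional 𝕜 (Submodule.span 𝕜 b) := FiniteDimensional.span_of_finite 𝕜 hf
    have hc := Submodule.closed_of_finiteDimensional (Submodule.span 𝕜 b)
    have htop : Submodule.span 𝕜 b = ⊤ := by
      apply SetLike.coe_injective
      rw [← hc.closure_eq, hd.closure_eq]; rfl
    rw [htop] at this
    exact Module.Finite.equiv (Submodule.topEquiv : (⊤ : Submodule 𝕜 X) ≃ₗ[𝕜] X)
  have : Countable b := (hs.mono hb).to_subtype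
  have : Infinite b := hbi.to_subtype
  obtain ⟨φ⟩ : Nonempty (ℕ ≃ b) := by
    letI := Encodable.ofCountable b
    letI := Denumerable.ofEncodableOfInfinite b
    exact ⟨(Denumerable.eqv b).symm⟩
  refine ⟨fun n => (φ n : X), hli.comp φ φ.injective, ?_⟩
  have : Set.range (fun n => (φ n : X)) = b := by
    have := φ.surjective.range_comp (Subtype.val : b → X)
    simpa [Function.comp_def] using this
  rw [this]; exact hd

/-- The flag generated by a sequence. -/
def flagE (𝕜 : Type*) [RCLike 𝕜] {X : Type*} [NormedAddCommGroup X]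
    [NormedSpace 𝕜 X] (e : ℕ → X) (n : ℕ) : Submodule 𝕜 X :=
  Submodule.span 𝕜 (e '' Set.Iio n)

section
variable {𝕜 : Type*} [RCLike 𝕜] {X : Type*} [NormedAddCommGroup X] [NormedSpace 𝕜 X] {e : ℕ → X}

theorem flagE_zero : flagE 𝕜 e 0 = ⊥ := by
  simp [flagE]

theorem flagE_mono : Monotone (flagE 𝕜 e) := fun _ _ h =>
  Submodule.span_mono (Set.image_mono (Set.Iio_subset_Iio h))

theorem mem_flagE {i n : ℕ} (h : i < n) : e i ∈ flagE 𝕜 e n :=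
  Submodule.subset_span ⟨i, h, rfl⟩

theorem mem_flagE_succ {n : ℕ} {x : X} :
    x ∈ flagE 𝕜 e (n+1) ↔ ∃ c : 𝕜, ∃ y ∈ flagE 𝕜 e n, x = c • e n + y := by
  have : Set.Iio (n+1) = insert n (Set.Iio n) := by ext i; simp only [Set.mem_Iio, Set.mem_insert_iff]; omega
  rw [flagE, this, Set.image_insert_eq, Submodule.mem_span_insert]; rfl

theorem flagE_closed (n : ℕ) : IsClosed (flagE 𝕜 e n : Set X) := by
  have : FiniteDimensional 𝕜 (flagE 𝕜 e n) :=
    FiniteDimensional.span_of_finite 𝕜 ((Set.finite_Iio n).image e)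
  exact Submodule.closed_of_finiteDimensional _

theorem notMem_flagE (he : LinearIndependent 𝕜 e) (n : ℕ) : e n ∉ flagE 𝕜 e n :=
  he.notMem_span_image (by simp)

theorem exists_fun (he : LinearIndependent 𝕜 e) (n : ℕ) :
    ∃ f : X →L[𝕜] 𝕜, (∀ x ∈ flagE 𝕜 e n, f x = 0) ∧ f (e n) ≠ 0 := by
  obtain ⟨g, hg, hle⟩ := Submodule.exists_le_ker_of_notMem (notMem_flagE he n)
  have : FiniteDimensional 𝕜 (flagE 𝕜 e (n+1)) :=
    FiniteDimensional.span_of_finite 𝕜 ((Set.finite_Iio (n+1)).image e)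
  obtain ⟨f, hf, -⟩ := exists_extension_norm_eq (flagE 𝕜 e (n+1))
    (LinearMap.toContinuousLinearMap (g.comp (flagE 𝕜 e (n+1)).subtype))
  refine ⟨f, fun x hx => ?_, ?_⟩
  · have := hf ⟨x, flagE_mono n.le_succ hx⟩
    rw [this]
    exact hle hx
  · have := hf ⟨e n, mem_flagE n.lt_succ_self⟩
    rw [this]
    exact hg

theorem exists_shift [CompleteSpace X] (he : LinearIndependent 𝕜 e) :
    ∃ N : X →L[𝕜] X, N (e 0) = 0 ∧
      ∀ n, ∃ w : 𝕜, w ≠ 0 ∧ ∃ y ∈ flagE 𝕜 e n, N (e (n+1)) = w • e n + y := by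
  choose f hf0 hf1 using fun n => exists_fun he n
  have hex : ∀ A : ℕ → (X →L[𝕜] X), ∃ w : ℕ → 𝕜, (∀ n, w n ≠ 0) ∧
      Summable (fun n => w n • A n) := by
    intro A
    refine ⟨fun n => (((1/2)^n / (1 + ‖A n‖) : ℝ) : 𝕜), fun n => ?_, ?_⟩
    · have : (0:ℝ) < (1/2)^n / (1 + ‖A n‖) := by positivity
      exact RCLike.ofReal_ne_zero.2 this.ne'
    · refine Summable.of_norm_bounded summable_geometric_two (fun n => ?_)
      have hpos : (0:ℝ) < (1/2)^n / (1 + ‖A n‖) := by positivity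
      rw [norm_smul, RCLike.norm_ofReal, abs_of_pos hpos]
      rw [div_mul_eq_mul_div, div_le_iff₀ (by positivity)]
      have : (0:ℝ) < (1/2)^n := by positivity
      nlinarith [norm_nonneg (A n)]
  obtain ⟨w, hw, hS⟩ := hex (fun n => (f (n+1)).smulRight (e n))
  obtain ⟨S, hSdef⟩ : ∃ S : ℕ → (X →L[𝕜] X), S = fun n => w n • (f (n+1)).smulRight (e n) :=
    ⟨_, rfl⟩
  rw [← hSdef] at hS
  have happ : ∀ x, HasSum (fun n => S n x) ((∑' n, S n) x) := fun x =>
    (ContinuousLinearMap.apply 𝕜 X x).hasSum hS.hasSum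
  have hSx : ∀ n x, S n x = w n • (f (n+1) x • e n) := fun n x => by rw [hSdef]; rfl
  have hz : ∀ m n, m ≤ n → S n (e m) = 0 := by
    intro m n h
    rw [hSx, hf0 (n+1) (e m) (mem_flagE (by omega))]; simp
  have hfin : ∀ m, (∑' n, S n) (e m) = ∑ n ∈ Finset.range m, S n (e m) := by
    intro m
    refine (happ (e m)).unique (hasSum_sum_of_ne_finset_zero ?_)
    intro n hn
    exact hz m n (by simpa using hn)
  refine ⟨∑' n, S n, by simp [hfin], fun n => ⟨w n * f (n+1) (e (n+1)), ?_,
    ∑ i ∈ Finset.range n, S i (e (n+1)), ?_, ?_⟩⟩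
  · exact mul_ne_zero (hw n) (hf1 _)
  · refine Submodule.sum_mem _ fun i hi => ?_
    rw [hSx]
    exact Submodule.smul_mem _ _ (Submodule.smul_mem _ _ (mem_flagE (by simpa using hi)))
  · rw [hfin, Finset.sum_range_succ, hSx n, smul_smul, add_comm]

variable {N : X →L[𝕜] X} (h0 : N (e 0) = 0)
  (hN : ∀ n, ∃ w : 𝕜, w ≠ 0 ∧ ∃ y ∈ flagE 𝕜 e n, N (e (n+1)) = w • e n + y)

include h0 hN in
theorem shift_map (n : ℕ) : ∀ x ∈ flagE 𝕜 e (n+1), N x ∈ flagE 𝕜 e n := by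
  induction n with
  | zero =>
    intro x hx
    obtain ⟨c, y, hy, rfl⟩ := mem_flagE_succ.1 hx
    rw [flagE_zero, Submodule.mem_bot] at hy
    simp [hy, h0]
  | succ n ih =>
    intro x hx
    obtain ⟨c, y, hy, rfl⟩ := mem_flagE_succ.1 hx
    obtain ⟨w, -, z, hz, h⟩ := hN n
    rw [map_add, map_smul, h]
    refine add_mem (Submodule.smul_mem _ _ (mem_flagE_succ.2 ⟨w, z, hz, rfl⟩)) ?_
    exact flagE_mono n.le_succ (ih y hy)

include h0 hN in
theorem shift_reflect (he : LinearIndependent 𝕜 e) (n m : ℕ) :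
    ∀ x ∈ flagE 𝕜 e m, N x ∈ flagE 𝕜 e n → x ∈ flagE 𝕜 e (n+1) := by
  induction m with
  | zero => intro x hx _; exact flagE_mono (Nat.zero_le _) hx
  | succ m ih =>
    intro x hx hNx
    by_cases hm : m ≤ n
    · exact flagE_mono (by omega) hx
    obtain ⟨k, rfl⟩ : ∃ k, m = k+1 := ⟨m-1, by omega⟩
    obtain ⟨c, y, hy, rfl⟩ := mem_flagE_succ.1 hx
    obtain ⟨w, hw, z, hz, h⟩ := hN k
    have hNy := shift_map h0 hN k y hy
    have hc : c = 0 := by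
      by_contra hc
      apply notMem_flagE he k
      have h1 : (c * w) • e k = N (c • e (k+1) + y) - N y - c • z := by
        rw [map_add, map_smul, h, smul_add, smul_smul]; abel
      rw [← Submodule.smul_mem_iff _ (mul_ne_zero hc hw), h1]
      exact sub_mem (sub_mem (flagE_mono (by omega) hNx) hNy) (Submodule.smul_mem _ _ hz)
    subst hc
    rw [zero_smul, zero_add] at hNx ⊢
    exact ih y hy hNx

/-- The commutant-type subspace. -/
def spaceM (e : ℕ → X) (N : X →L[𝕜] X) : Submodule 𝕜 (X →L[𝕜] X) where
  carrier := {T | (∀ x, T (N x) = N (T x)) ∧ ∀ n, ∀ x ∈ flagE 𝕜 e (n+1), T x ∈ flagE 𝕜 e n}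
  add_mem' := fun {S T} hS hT => ⟨fun x => by simp [hS.1 x, hT.1 x], fun n x hx =>
    add_mem (hS.2 n x hx) (hT.2 n x hx)⟩
  zero_mem' := ⟨fun x => by simp, fun n x _ => by simp⟩
  smul_mem' := fun c T hT => ⟨fun x => by simp [hT.1 x], fun n x hx =>
    Submodule.smul_mem _ c (hT.2 n x hx)⟩

theorem spaceM_closed : IsClosed (spaceM e N : Set (X →L[𝕜] X)) := by
  have hev : ∀ x : X, Continuous (fun T : X →L[𝕜] X => T x) := fun x =>
    (ContinuousLinearMap.apply 𝕜 X x).continuous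
  have : (spaceM e N : Set (X →L[𝕜] X)) = (⋂ x, {T | T (N x) = N (T x)}) ∩
      ⋂ n, ⋂ x ∈ flagE 𝕜 e (n+1), {T : X →L[𝕜] X | T x ∈ flagE 𝕜 e n} := by
    ext T; simp [spaceM]
  rw [this]
  refine (isClosed_iInter fun x => isClosed_eq (hev _) (N.continuous.comp (hev x))).inter ?_
  exact isClosed_iInter fun n => isClosed_iInter fun x => isClosed_iInter fun _ =>
    (flagE_closed n).preimage (hev x)

theorem pow_kill {T : X →L[𝕜] X} (hT : ∀ n, ∀ x ∈ flagE 𝕜 e (n+1), T x ∈ flagE 𝕜 e n) (n : ℕ) :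
    ∀ x ∈ flagE 𝕜 e n, (T ^ n) x = 0 := by
  induction n with
  | zero => intro x hx; rw [flagE_zero] at hx; simpa using hx
  | succ n ih => intro x hx; rw [pow_succ]; exact ih _ (hT n x hx)

include h0 hN in
theorem shift_pow_mem (k : ℕ) : N ^ (k+1) ∈ spaceM e N := by
  induction k with
  | zero => rw [zero_add, pow_one]; exact ⟨fun x => rfl, shift_map h0 hN⟩
  | succ k ih =>
    refine ⟨fun x => ?_, fun n x hx => ?_⟩
    · have := ih.1 x
      rw [pow_succ' N (k+1)]
      simp only [mul_apply_eq_comp]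
      rw [this]
    · rw [pow_succ' N (k+1)]
      have := ih.2 n x hx
      exact shift_map h0 hN n _ (flagE_mono n.le_succ this)

include h0 hN in
theorem pow_ne (he : LinearIndependent 𝕜 e) (m : ℕ) :
    ∀ x ∈ flagE 𝕜 e (m+1), x ∉ flagE 𝕜 e m → (N ^ m) x ≠ 0 := by
  induction m with
  | zero => intro x _ hx h; apply hx; rw [flagE_zero]; simpa using h
  | succ m ih =>
    intro x hx hx'
    rw [pow_succ]
    exact ih _ (shift_map h0 hN _ x hx) fun h => hx' (shift_reflect h0 hN he m _ x hx h)

include h0 hN in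
theorem spaceM_inf (he : LinearIndependent 𝕜 e) : ¬ FiniteDimensional 𝕜 (spaceM e N) := by
  intro hfd
  let F : ℕ →o (Submodule 𝕜 (spaceM e N))ᵒᵈ :=
    { toFun := fun m => OrderDual.toDual
        { carrier := {T | ∀ x ∈ flagE 𝕜 e m, (T : X →L[𝕜] X) x = 0}
          add_mem' := fun {S T} hS hT x hx => by simp [hS x hx, hT x hx]
          zero_mem' := fun x _ => by simp
          smul_mem' := fun c T hT x hx => by simp [hT x hx] }
      monotone' := fun m n h => by
        intro T hT x hx
        exact hT x (flagE_mono h hx) }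
  obtain ⟨n, hn⟩ := IsArtinian.monotone_stabilizes F
  have h1 := hn (n+1) n.le_succ
  have h2 := hn (n+2) (by omega)
  have hmem : (⟨N ^ (n+1), shift_pow_mem h0 hN n⟩ : spaceM e N) ∈ OrderDual.ofDual (F (n+1)) :=
    pow_kill (shift_map h0 hN) (n+1)
  rw [← h1, h2] at hmem
  exact pow_ne h0 hN he (n+1) (e (n+1)) (mem_flagE (by omega)) (notMem_flagE he _)
    (hmem (e (n+1)) (mem_flagE (by omega)))

theorem dense_flag (hd : Dense ((Submodule.span 𝕜 (Set.range e) : Submodule 𝕜 X) : Set X)) :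
    Dense {x : X | ∃ n, x ∈ flagE 𝕜 e n} := by
  refine hd.mono ?_
  intro x hx
  have hdir : Directed (· ≤ ·) (flagE 𝕜 e) := flagE_mono.directed_le
  have hle : Submodule.span 𝕜 (Set.range e) ≤ ⨆ n, flagE 𝕜 e n := by
    rw [Submodule.span_le]
    rintro _ ⟨i, rfl⟩
    exact Submodule.mem_iSup_of_mem (i+1) (mem_flagE i.lt_succ_self)
  exact (Submodule.mem_iSup_of_directed _ hdir).1 (hle hx)

include h0 hN in
theorem dense_range (he : LinearIndependent 𝕜 e)
    (hd : Dense ((Submodule.span 𝕜 (Set.range e) : Submodule 𝕜 X) : Set X))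
    {T : X →L[𝕜] X} (hT : T ∈ spaceM e N) (hT0 : T ≠ 0) : DenseRange T := by
  classical
  have hex : ∃ n, T (e n) ≠ 0 := by
    by_contra! h
    apply hT0
    refine ContinuousLinearMap.ext_on hd ?_
    rintro _ ⟨n, rfl⟩
    simp [h n]
  let m := Nat.find hex
  have hm : T (e m) ≠ 0 := Nat.find_spec hex
  have hlt : ∀ i < m, T (e i) = 0 := fun i hi => not_not.1 (Nat.find_min hex hi)
  have hEm : ∀ x ∈ flagE 𝕜 e m, T x = 0 := by
    intro x hx
    have : flagE 𝕜 e m ≤ LinearMap.ker (T : X →ₗ[𝕜] X) := by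
      rw [flagE, Submodule.span_le]
      rintro _ ⟨i, hi, rfl⟩
      exact hlt i hi
    exact this hx
  have hTE : ∀ n, ∀ x ∈ flagE 𝕜 e n, T x ∈ flagE 𝕜 e n := fun n x hx =>
    hT.2 n x (flagE_mono n.le_succ hx)
  have hA : ∀ j, ∀ x ∈ flagE 𝕜 e (m+j), T x ∈ flagE 𝕜 e j := by
    intro j
    induction j with
    | zero => intro x hx; rw [hEm x hx]; exact zero_mem _
    | succ j ih =>
      intro x hx
      refine shift_reflect h0 hN he j _ (T x) (hTE _ x hx) ?_
      rw [← hT.1]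
      exact ih _ (shift_map h0 hN _ x hx)
  have hB : ∀ j, T (e (m+j)) ∉ flagE 𝕜 e j := by
    intro j
    induction j with
    | zero => rw [flagE_zero]; simpa using hm
    | succ j ih =>
      intro h
      have h1 := shift_map h0 hN j _ h
      obtain ⟨w, hw, y, hy, hwy⟩ := hN (m+j)
      rw [← hT.1, ← add_assoc, hwy, map_add, map_smul] at h1
      apply ih
      rw [← Submodule.smul_mem_iff _ hw]
      exact (Submodule.add_mem_iff_left _ (hA j y hy)).1 h1
  have hC : ∀ j, flagE 𝕜 e j ≤ LinearMap.range (T : X →ₗ[𝕜] X) := by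
    intro j
    induction j with
    | zero => rw [flagE_zero]; exact bot_le
    | succ j ih =>
      obtain ⟨c, y, hy, hcy⟩ := mem_flagE_succ.1 (hA (j+1) (e (m+j)) (mem_flagE (by omega)))
      have hc : c ≠ 0 := by
        rintro rfl
        apply hB j
        rw [hcy]; simpa using hy
      have hej : e j ∈ LinearMap.range (T : X →ₗ[𝕜] X) := by
        rw [← Submodule.smul_mem_iff _ hc, ← Submodule.add_mem_iff_left _ (ih hy), ← hcy]
        exact ⟨_, rfl⟩
      intro x hx
      obtain ⟨d, z, hz, rfl⟩ := mem_flagE_succ.1 hx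
      exact add_mem (Submodule.smul_mem _ _ hej) (ih hz)
  refine (dense_flag hd).mono ?_
  rintro x ⟨n, hx⟩
  exact hC n hx

end

/-- On any infinite-dimensional separable Banach space `X` over `𝕜 ∈ {ℝ, ℂ}`,
the set of supercyclic operators in `L(X)` is spaceable: there is an infinite-dimensional
closed linear subspace `M` of `L(X)` all of whose nonzero members are supercyclic. -/
theorem supercyclic_operators_spaceable
    {𝕜 : Type*} [RCLike 𝕜] {X : Type*} [NormedAddCommGroup X] [NormedSpace 𝕜 X]
    [CompleteSpace X] [TopologicalSpace.SeparableSpace X]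
    (hinf : ¬ FiniteDimensional 𝕜 X) :
    ∃ M : Submodule 𝕜 (X →L[𝕜] X),
      IsClosed (M : Set (X →L[𝕜] X)) ∧
      ¬ FiniteDimensional 𝕜 M ∧
      ∀ T ∈ M, T ≠ 0 → Supercyclic T := by
  obtain ⟨e, he, hd⟩ := exists_li_dense hinf
  obtain ⟨N, h0, hN⟩ := exists_shift he
  refine ⟨spaceM e N, spaceM_closed, spaceM_inf h0 hN he, fun T hT hT0 => ?_⟩
  refine supercyclic_of_dense T ((dense_flag hd).mono ?_) (dense_range h0 hN he hd hT hT0)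
  rintro x ⟨n, hx⟩
  exact ⟨n, pow_kill hT.2 n x hx⟩
end

section
/- Let ℓ¹ be the Banach space of absolutely summable 𝕂-valued sequences, 𝕂 ∈ {ℝ, ℂ}. There exists a linear isometry J : ℓ¹ → L(ℓ¹) whose range is closed and such that every nonzero operator in the range of J is supercyclic. In particular, the set of supercyclic operators in L(ℓ¹), together with the null operator, contains an isometric copy of ℓ¹. -/
open Filter Topology
open scoped ENNReal

instance : Fact ((1 : ℝ≥0∞) ≤ 1) := ⟨le_rfl⟩

noncomputable section L1aux

variable {𝕜 : Type*} [RCLike 𝕜]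

abbrev L1 (𝕜 : Type*) [RCLike 𝕜] := lp (fun _ : ℕ => 𝕜) 1

lemma l1_summable (x : L1 𝕜) : Summable fun n => ‖x n‖ := by
  have := (lp.memℓp x).summable (p := 1) (by simp)
  simpa using this

lemma l1_norm (x : L1 𝕜) : ‖x‖ = ∑' n, ‖x n‖ := by
  have := lp.norm_eq_tsum_rpow (p := 1) (by simp) x
  simpa using this

def bshift (𝕜 : Type*) [RCLike 𝕜] : L1 𝕜 →L[𝕜] L1 𝕜 :=
  LinearMap.mkContinuous
    { toFun := fun x => ⟨fun n => x (n + 1), by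
        refine memℓp_gen ?_
        simpa using (summable_nat_add_iff 1).2 (l1_summable x)⟩
      map_add' := fun x y => by ext n; rfl
      map_smul' := fun c x => by ext n; rfl } 1
    (fun x => by
      rw [one_mul, l1_norm, l1_norm, (l1_summable x).tsum_eq_zero_add]
      exact le_add_of_nonneg_left (norm_nonneg _))

lemma bshift_apply (x : L1 𝕜) (n : ℕ) : bshift 𝕜 x n = x (n + 1) := rfl

lemma bshift_norm : ‖bshift 𝕜‖ ≤ 1 := LinearMap.mkContinuous_norm_le _ zero_le_one _

def ee (𝕜 : Type*) [RCLike 𝕜] (k : ℕ) : L1 𝕜 := lp.single 1 k (1 : 𝕜)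

lemma ee_apply (k n : ℕ) : ee 𝕜 k n = if n = k then 1 else 0 := by
  simp [ee, lp.single_apply, Pi.single_apply]

lemma bpow_apply (m : ℕ) (x : L1 𝕜) (n : ℕ) : (bshift 𝕜 ^ m) x n = x (n + m) := by
  induction m generalizing n with
  | zero => simp
  | succ m ih =>
    rw [pow_succ', mul_apply_eq_comp, bshift_apply, ih]
    rw [show n + 1 + m = n + (m + 1) by omega]

lemma bpow_ee_ge (m k : ℕ) (h : k < m) : (bshift 𝕜 ^ m) (ee 𝕜 k) = 0 := by
  ext n
  rw [bpow_apply, ee_apply, if_neg (by omega)]; rfl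

lemma bpow_ee (m k : ℕ) : (bshift 𝕜 ^ m) (ee 𝕜 (k + m)) = ee 𝕜 k := by
  ext n
  rw [bpow_apply, ee_apply, ee_apply]; simp

lemma bpow_norm (m : ℕ) : ‖bshift 𝕜 ^ m‖ ≤ 1 := by
  refine ContinuousLinearMap.opNorm_le_bound _ zero_le_one fun x => ?_
  induction m with
  | zero => simp
  | succ m ih =>
    rw [pow_succ', mul_apply_eq_comp]
    refine ((bshift 𝕜).le_of_opNorm_le bshift_norm _).trans ?_
    simpa using ih

lemma jterm_norm (f : L1 𝕜) (n : ℕ) : ‖f n • bshift 𝕜 ^ (n + 1)‖ ≤ ‖f n‖ := by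
  rw [norm_smul]
  exact mul_le_of_le_one_right (norm_nonneg _) (bpow_norm _)

lemma jsummable (f : L1 𝕜) : Summable fun n => f n • bshift 𝕜 ^ (n + 1) :=
  Summable.of_norm_bounded (l1_summable f) (jterm_norm f)

def jop (f : L1 𝕜) : L1 𝕜 →L[𝕜] L1 𝕜 := ∑' n, f n • bshift 𝕜 ^ (n + 1)

lemma jop_ee (f : L1 𝕜) (k : ℕ) :
    jop f (ee 𝕜 k) = ∑ n ∈ Finset.range k, f n • ee 𝕜 (k - 1 - n) := by
  have h1 : HasSum (fun n => (f n • bshift 𝕜 ^ (n + 1)) (ee 𝕜 k)) (jop f (ee 𝕜 k)) :=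
    by
    have h0 : HasSum (fun n => f n • bshift 𝕜 ^ (n + 1)) (jop f) := (jsummable f).hasSum
    have h2 := h0.map (ContinuousLinearMap.apply 𝕜 (L1 𝕜) (ee 𝕜 k))
      (ContinuousLinearMap.continuous _)
    simpa only [Function.comp_def, ContinuousLinearMap.apply_apply] using h2
  rw [← h1.tsum_eq, tsum_eq_sum (s := Finset.range k)]
  · refine Finset.sum_congr rfl fun n hn => ?_
    have hn := Finset.mem_range.1 hn
    obtain ⟨j, rfl⟩ : ∃ j, k = j + (n + 1) := ⟨k - (n + 1), by omega⟩
    rw [ContinuousLinearMap.smul_apply, bpow_ee]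
    congr 2; omega
  · intro n hn
    have hn : k ≤ n := by simpa using hn
    rw [ContinuousLinearMap.smul_apply, bpow_ee_ge _ _ (by omega), smul_zero]

lemma ee_norm (k : ℕ) : ‖ee 𝕜 k‖ = 1 := by
  simp [ee, lp.norm_single]

lemma jop_norm (f : L1 𝕜) : ‖jop f‖ = ‖f‖ := by
  apply le_antisymm
  · rw [l1_norm]
    exact tsum_of_norm_bounded (l1_summable f).hasSum (jterm_norm f)
  · rw [l1_norm]
    refine Real.tsum_le_of_sum_range_le (fun _ => norm_nonneg _) fun k => ?_
    have h := (jop f).le_opNorm (ee 𝕜 k)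
    rw [ee_norm, mul_one] at h
    refine le_trans (le_of_eq ?_) h
    rw [jop_ee, ← Finset.sum_range_reflect]
    have h2 := lp.norm_sum_single (E := fun _ : ℕ => 𝕜) (p := 1) (by simp)
      (fun j => f (k - 1 - j)) (Finset.range k)
    simp only [ENNReal.toReal_one, Real.rpow_one] at h2
    rw [← h2, ← Finset.sum_range_reflect]
    congr 1
    refine Finset.sum_congr rfl fun n hn => ?_
    have hn := Finset.mem_range.1 hn
    rw [show k - 1 - (k - 1 - n) = n by omega, ee, ← lp.single_smul]
    simp

def jiso (𝕜 : Type*) [RCLike 𝕜] : L1 𝕜 →ₗᵢ[𝕜] (L1 𝕜 →L[𝕜] L1 𝕜) where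
  toFun := jop
  map_add' f g := by
    unfold jop
    rw [← (jsummable f).tsum_add (jsummable g)]
    refine tsum_congr fun n => ?_
    rw [← add_smul]; rfl
  map_smul' c f := by
    unfold jop
    rw [RingHom.id_apply, ← (jsummable f).tsum_const_smul c]
    refine tsum_congr fun n => ?_
    rw [smul_smul]; rfl
  norm_map' := jop_norm

def c00 (𝕜 : Type*) [RCLike 𝕜] : Submodule 𝕜 (L1 𝕜) := Submodule.span 𝕜 (Set.range (ee 𝕜))

lemma c00_dense : Dense (c00 𝕜 : Set (L1 𝕜)) := by
  intro x
  have h := lp.hasSum_single (E := fun _ : ℕ => 𝕜) (p := 1) (by simp) x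
  refine mem_closure_of_tendsto h (Eventually.of_forall fun s => ?_)
  refine (c00 𝕜).sum_mem fun i _ => ?_
  have : lp.single 1 i (x i) = x i • ee 𝕜 i := by
    rw [ee, ← lp.single_smul]; simp
  rw [this]
  exact (c00 𝕜).smul_mem _ (Submodule.subset_span ⟨i, rfl⟩)

lemma l1_sep : TopologicalSpace.SeparableSpace (L1 𝕜) := by
  have h : TopologicalSpace.IsSeparable (c00 𝕜 : Set (L1 𝕜)) :=
    (Set.countable_range (ee 𝕜)).isSeparable.span
  have h2 := h.closure
  rw [c00_dense.closure_eq] at h2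
  exact TopologicalSpace.isSeparable_univ_iff.1 h2

lemma jop_nil_ee (f : L1 𝕜) (N : ℕ) : ∀ k < N, (jop f ^ N) (ee 𝕜 k) = 0 := by
  induction N with
  | zero => intro k hk; omega
  | succ N ih =>
    intro k hk
    rw [pow_succ, mul_apply_eq_comp, jop_ee, map_sum]
    refine Finset.sum_eq_zero fun n hn => ?_
    have hn := Finset.mem_range.1 hn
    rw [map_smul, ih _ (by omega), smul_zero]

lemma pow_zero_mono (T : L1 𝕜 →L[𝕜] L1 𝕜) (x : L1 𝕜) {n m : ℕ} (h : n ≤ m)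
    (hx : (T ^ n) x = 0) : (T ^ m) x = 0 := by
  obtain ⟨j, rfl⟩ := Nat.exists_eq_add_of_le' h
  rw [pow_add, mul_apply_eq_comp, hx, map_zero]

lemma jop_nil (f : L1 𝕜) (x : L1 𝕜) (hx : x ∈ c00 𝕜) : ∃ N, (jop f ^ N) x = 0 := by
  induction hx using Submodule.span_induction with
  | mem x h =>
    obtain ⟨k, rfl⟩ := h
    exact ⟨k + 1, jop_nil_ee f _ k (by omega)⟩
  | zero => exact ⟨0, map_zero _⟩
  | add x y _ _ h1 h2 =>
    obtain ⟨a, ha⟩ := h1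
    obtain ⟨b, hb⟩ := h2
    refine ⟨max a b, ?_⟩
    rw [map_add, pow_zero_mono _ _ (le_max_left a b) ha,
      pow_zero_mono _ _ (le_max_right a b) hb, add_zero]
  | smul c x _ h =>
    obtain ⟨a, ha⟩ := h
    exact ⟨a, by rw [map_smul, ha, smul_zero]⟩

lemma jop_surj (f : L1 𝕜) (hf : f ≠ 0) :
    c00 𝕜 ≤ (c00 𝕜).map (jop f : L1 𝕜 →ₗ[𝕜] L1 𝕜) := by
  classical
  have hex : ∃ n, f n ≠ 0 := by
    by_contra! h
    exact hf (by ext n; exact h n)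
  obtain ⟨m, hm, hmin⟩ : ∃ m, f m ≠ 0 ∧ ∀ i < m, f i = 0 :=
    ⟨Nat.find hex, Nat.find_spec hex, fun i hi => by simpa using Nat.find_min hex hi⟩
  set R := (c00 𝕜).map (jop f : L1 𝕜 →ₗ[𝕜] L1 𝕜) with hR
  refine Submodule.span_le.2 ?_
  rintro _ ⟨k, rfl⟩
  show ee 𝕜 k ∈ R
  induction k using Nat.strong_induction_on with
  | _ k ih =>
    have h1 : jop f (ee 𝕜 (k + m + 1)) ∈ R :=
      Submodule.mem_map_of_mem (Submodule.subset_span ⟨_, rfl⟩)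
    rw [jop_ee, Finset.sum_eq_add_sum_sdiff_singleton_of_mem (i := m) (by simp)] at h1
    have h2 : ∑ n ∈ Finset.range (k + m + 1) \ {m}, f n • ee 𝕜 (k + m + 1 - 1 - n) ∈ R := by
      refine R.sum_mem fun n hn => ?_
      simp only [Finset.mem_sdiff, Finset.mem_range, Finset.mem_singleton] at hn
      rcases lt_or_ge n m with h | h
      · rw [hmin n h, zero_smul]; exact R.zero_mem
      · exact R.smul_mem _ (ih _ (by omega))
    have h3 := (R.add_mem_iff_left h2).1 h1
    rw [show k + m + 1 - 1 - m = k by omega] at h3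
    exact (R.smul_mem_iff hm).1 h3

lemma jop_pow_surj (f : L1 𝕜) (hf : f ≠ 0) (N : ℕ) (y : L1 𝕜) (hy : y ∈ c00 𝕜) :
    ∃ z, (jop f ^ N) z = y := by
  suffices h : ∃ z ∈ c00 𝕜, (jop f ^ N) z = y from ⟨h.choose, h.choose_spec.2⟩
  induction N generalizing y with
  | zero => exact ⟨y, hy, rfl⟩
  | succ N ih =>
    obtain ⟨w, hw, hwy⟩ := jop_surj f hf hy
    obtain ⟨z, hz, hzw⟩ := ih w hw
    refine ⟨z, hz, ?_⟩
    rw [pow_succ', mul_apply_eq_comp, hzw]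
    exact hwy

lemma jop_trans (f : L1 𝕜) (hf : f ≠ 0) (U V : Set (L1 𝕜)) (hU : IsOpen U) (hV : IsOpen V)
    (hUn : U.Nonempty) (hVn : V.Nonempty) :
    ∃ x ∈ U, ∃ (c : 𝕜) (N : ℕ), c • (jop f ^ N) x ∈ V := by
  obtain ⟨x, hxU, hx⟩ := c00_dense.exists_mem_open hU hUn |>.imp fun _ h => h.symm
  obtain ⟨y, hyV, hy⟩ := c00_dense.exists_mem_open hV hVn |>.imp fun _ h => h.symm
  obtain ⟨N, hN⟩ := jop_nil f x hx
  obtain ⟨z, hz⟩ := jop_pow_surj f hf N y hy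
  have hcont : Tendsto (fun t : 𝕜 => x + t • z) (𝓝[≠] 0) (𝓝 x) := by
    have : Continuous (fun t : 𝕜 => x + t • z) := by fun_prop
    have h := this.tendsto 0
    simp only [zero_smul, add_zero] at h
    exact h.mono_left nhdsWithin_le_nhds
  obtain ⟨t, ht, ht0⟩ := ((hcont.eventually (hU.mem_nhds hxU)).and self_mem_nhdsWithin).exists
  have ht0 : t ≠ 0 := ht0
  refine ⟨_, ht, t⁻¹, N, ?_⟩
  rw [map_add, hN, zero_add, map_smul, hz, smul_smul, inv_mul_cancel₀ ht0, one_smul]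
  exact hyV

lemma jop_super (f : L1 𝕜) (hf : f ≠ 0) : Supercyclic (jop f) := by
  have : TopologicalSpace.SeparableSpace (L1 𝕜) := l1_sep
  have : SecondCountableTopology (L1 𝕜) := UniformSpace.secondCountable_of_separable _
  let Bs := TopologicalSpace.countableBasis (L1 𝕜)
  have hB := TopologicalSpace.isBasis_countableBasis (L1 𝕜)
  let G : Set (L1 𝕜) → Set (L1 𝕜) := fun V => ⋃ (c : 𝕜) (N : ℕ), {x | c • (jop f ^ N) x ∈ V}
  have hd : Dense (⋂ V ∈ Bs, G V) := by
    refine dense_biInter_of_isOpen ?_ (TopologicalSpace.countable_countableBasis _) ?_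
    · intro V hV
      refine isOpen_iUnion fun c => isOpen_iUnion fun N => ?_
      exact (hB.isOpen hV).preimage (by fun_prop : Continuous fun x => c • (jop f ^ N) x)
    · intro V hV
      rw [dense_iff_inter_open]
      intro U hU hUn
      obtain ⟨x, hx, c, N, h⟩ := jop_trans f hf U V hU (hB.isOpen hV) hUn
        (TopologicalSpace.nonempty_of_mem_countableBasis hV)
      exact ⟨x, hx, Set.mem_iUnion.2 ⟨c, Set.mem_iUnion.2 ⟨N, h⟩⟩⟩
  obtain ⟨y, hy⟩ := hd.nonempty
  refine ⟨y, ?_⟩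
  rw [hB.dense_iff]
  intro V hV _
  have := Set.mem_iInter₂.1 hy V hV
  obtain ⟨c, h⟩ := Set.mem_iUnion.1 this
  obtain ⟨N, h⟩ := Set.mem_iUnion.1 h
  exact ⟨_, h, c, N, rfl⟩

end L1aux

/-- There is a linear isometry `J : ℓ¹ → L(ℓ¹)` with closed range such that
every nonzero operator in the range of `J` is supercyclic.  In particular, the set of
supercyclic operators on `ℓ¹`, together with the null operator, contains an isometric copy
of `ℓ¹`. -/
theorem supercyclic_contains_isometric_copy_of_l1 {𝕜 : Type*} [RCLike 𝕜] :
    ∃ J : lp (fun _ : ℕ => 𝕜) 1 →ₗᵢ[𝕜]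
        (lp (fun _ : ℕ => 𝕜) 1 →L[𝕜] lp (fun _ : ℕ => 𝕜) 1),
      IsClosed (Set.range J) ∧
      ∀ f : lp (fun _ : ℕ => 𝕜) 1, J f ≠ 0 → Supercyclic (J f) := by
  refine ⟨jiso 𝕜, (jiso 𝕜).isometry.isClosedEmbedding.isClosed_range, fun f hf => ?_⟩
  refine jop_super f ?_
  rintro rfl
  exact hf (map_zero _)
end

section
/- The linear map T : ℓ¹ → L(X) given by T(λ) = Σₖ₌₁^∞ λₖ·B_wᵏ is injective; that is, if λ ∈ ℓ¹ and Σₖ₌₁^∞ λₖ·B_wᵏ = 0 in L(X), then λ = 0. -/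
open Filter Topology
open scoped ENNReal

/-- (Indices are 0-based: the coefficient `f k` of `f ∈ ℓ¹` multiplies
`B_w^{k+1}`, matching the paper's `λ_k B_w^k` for `k ≥ 1`.)  The linear map
`T : ℓ¹ → L(X)`, `T f = Σₖ f k • B_w^{k+1}`, is injective: if the sum vanishes then
`f = 0`. -/
theorem sum_of_powers_injective
    {𝕜 : Type*} [RCLike 𝕜] {X : Type*} [NormedAddCommGroup X] [NormedSpace 𝕜 X]
    [CompleteSpace X]
    (x : ℕ → X) (xs : ℕ → X →L[𝕜] 𝕜) (C : ℝ)
    (hx : ∀ n, ‖x n‖ = 1)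
    (hxs : ∀ n, ‖xs n‖ ≤ C)
    (hbi : ∀ m n, xs m (x n) = if m = n then 1 else 0)
    (hdense : Dense (Submodule.span 𝕜 (Set.range x) : Set X))
    (hsep : ∀ z : X, (∀ n, xs n z = 0) → z = 0)
    (w : ℕ → ℝ)
    (hw_pos : ∀ n, 0 < w n)
    (hw_anti : StrictAnti w)
    (hw_lim : Tendsto w atTop (nhds 0))
    (hw_sum : Summable w)
    (hw_le : ∑' n, w n ≤ C⁻¹)
    (B : X →L[𝕜] X)
    (hB : ∀ z : X, B z = ∑' n : ℕ, ((w n : 𝕜) * xs (n + 1) z) • x n)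
    (f : lp (fun _ : ℕ => 𝕜) 1)
    (hf : (∑' k : ℕ, (f k : 𝕜) • B ^ (k + 1)) = 0) :
    f = 0 := by
  have hC : 0 < C := by
    have h1 : ‖xs 0 (x 0)‖ ≤ ‖xs 0‖ * ‖x 0‖ := (xs 0).le_opNorm _
    rw [hbi, hx] at h1
    simp at h1
    linarith [hxs 0]
  have hBn : ‖B‖ ≤ 1 := by
    refine ContinuousLinearMap.opNorm_le_bound _ zero_le_one (fun z => ?_)
    rw [hB]
    have hs : HasSum (fun n => w n * (C * ‖z‖)) ((∑' n, w n) * (C * ‖z‖)) :=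
      hw_sum.hasSum.mul_right _
    refine (tsum_of_norm_bounded hs (fun n => ?_)).trans ?_
    · rw [norm_smul, hx, mul_one, norm_mul, RCLike.norm_ofReal, abs_of_pos (hw_pos n)]
      refine mul_le_mul_of_nonneg_left ?_ (hw_pos n).le
      exact ((xs (n + 1)).le_opNorm z).trans
        (mul_le_mul_of_nonneg_right (hxs _) (norm_nonneg _))
    · have h2 : (∑' n, w n) * (C * ‖z‖) ≤ C⁻¹ * (C * ‖z‖) :=
        mul_le_mul_of_nonneg_right hw_le (by positivity)
      rw [inv_mul_cancel_left₀ hC.ne'] at h2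
      linarith
  have hB0 : B (x 0) = 0 := by
    rw [hB]
    simp [hbi]
  have hBs : ∀ m, B (x (m + 1)) = (w m : 𝕜) • x m := by
    intro m
    rw [hB, tsum_eq_single m]
    · simp [hbi]
    · intro n hn
      simp [hbi, hn]
  have hpow : ∀ k m, (k ≠ m → xs 0 ((B ^ k) (x m)) = 0) ∧
      (k = m → xs 0 ((B ^ k) (x m)) ≠ 0) := by
    intro k
    induction k with
    | zero =>
      intro m
      simp only [pow_zero, ContinuousLinearMap.one_apply, hbi]
      constructor
      · intro h
        simp [h]
      · intro h
        simp [h]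
    | succ k ih =>
      intro m
      rw [pow_succ, ContinuousLinearMap.mul_apply]
      cases m with
      | zero => simp [hB0]
      | succ m =>
        rw [hBs, map_smul, map_smul, smul_eq_mul]
        constructor
        · intro h
          rw [(ih m).1 (by omega), mul_zero]
        · intro h
          exact mul_ne_zero (by exact_mod_cast (hw_pos m).ne') ((ih m).2 (by omega))
  have hfs : Summable (fun k => ‖f k‖) := by
    have := (lp.memℓp f).summable (by simp)
    simpa using this
  have hsum : Summable (fun k : ℕ => (f k : 𝕜) • B ^ (k + 1)) := by
    refine Summable.of_norm_bounded hfs (fun k => ?_)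
    rw [norm_smul]
    have h3 : ‖B ^ (k + 1)‖ ≤ 1 :=
      (norm_pow_le' B (Nat.succ_pos k)).trans (pow_le_one₀ (norm_nonneg _) hBn)
    exact mul_le_of_le_one_right (norm_nonneg _) h3
  have hHS := hsum.hasSum
  rw [hf] at hHS
  ext m
  have h4 := ((xs 0).comp (ContinuousLinearMap.apply 𝕜 X (x (m + 1)))).hasSum hHS
  have h5 := h4.tsum_eq
  rw [tsum_eq_single m] at h5
  · simp only [ContinuousLinearMap.comp_apply, map_zero, map_smul, smul_eq_mul,
      ContinuousLinearMap.apply_apply] at h5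
    rcases mul_eq_zero.1 h5 with h | h
    · simpa using h
    · exact absurd h ((hpow _ _).2 rfl)
  · intro k hk
    simp only [ContinuousLinearMap.comp_apply, map_smul, smul_eq_mul,
      ContinuousLinearMap.apply_apply]
    rw [(hpow _ _).1 (by omega), mul_zero]
end

section
/- Let 0 ≠ λ = (λₖ) ∈ ℓ¹ and set 𝔭 := 𝔭_λ. For every d ∈ ℕ there exists a linear map S_{λ,d} : X_d → X whose range is contained in span{x_{𝔭+1}, …, x_{𝔭+d}}, satisfying for every y ∈ X_d: (A1) T_λ(S_{λ,d}(y)) = y; (B1) ‖S_{λ,d}(y)‖ ≤ F_λ(d)·‖y‖; and (C1) if y ≠ 0 then the largest n with xₙ*(S_{λ,d}(y)) ≠ 0 equals 𝔭 + 𝔮_y, where 𝔮_y is the largest n with xₙ*(y) ≠ 0. -/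
open Filter Topology
open scoped ENNReal

theorem aux_bound (d : ℕ) (s : ℕ → ℝ) (r K : ℝ) (hr : 1 ≤ r) (hK : 0 ≤ K) (hs : ∀ j, 0 ≤ s j)
    (h : ∀ m < d, s m ≤ K + r * ∑ j ∈ Finset.Ico (m + 1) d, s j) :
    ∀ k ≤ d, r * ∑ j ∈ Finset.Ico (d - k) d, s j ≤ K * (2 ^ k - 1) * r ^ k := by
  intro k
  induction k with
  | zero => intro _; simp
  | succ k ih =>
    intro hk
    have ih := ih (by omega)
    have h1 := h (d - (k + 1)) (by omega)
    have e : d - (k + 1) + 1 = d - k := by omega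
    rw [Finset.sum_eq_sum_Ico_succ_bot (by omega), e]
    rw [e] at h1
    set A := ∑ j ∈ Finset.Ico (d - k) d, s j
    have h2 : (1 : ℝ) ≤ r ^ k := one_le_pow₀ hr
    have h3 : r * (s (d - (k + 1)) + A) ≤ r * (K + 2 * (r * A)) := by
      have : s (d - (k+1)) + A ≤ K + (r * A) + A := by linarith
      have h5 : r * (s (d - (k + 1)) + A) ≤ r * (K + r * A + A) :=
        mul_le_mul_of_nonneg_left this (by linarith)
      have hA : 0 ≤ A := Finset.sum_nonneg fun j _ => hs j
      nlinarith [mul_nonneg (mul_nonneg (by linarith : 0 ≤ r) hA) (by linarith : 0 ≤ r - 1)]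
    have h4 : K + 2 * (r * A) ≤ K * r ^ k + 2 * (K * (2 ^ k - 1) * r ^ k) := by nlinarith
    calc _ ≤ r * (K + 2 * (r * A)) := h3
      _ ≤ r * (K * r ^ k + 2 * (K * (2 ^ k - 1) * r ^ k)) :=
        mul_le_mul_of_nonneg_left h4 (by linarith)
      _ = _ := by ring

theorem two_pow_le_fact (d : ℕ) : 2 ^ d ≤ Nat.factorial (d + 1) := by
  induction d with
  | zero => simp
  | succ n ih => rw [pow_succ, Nat.factorial_succ (n+1)]; nlinarith [Nat.zero_le n]

section
variable {𝕜 : Type*} [RCLike 𝕜] {X : Type*} [NormedAddCommGroup X] [NormedSpace 𝕜 X]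
    [CompleteSpace X]

theorem aux_B (x : ℕ → X) (xs : ℕ → X →L[𝕜] 𝕜) (C : ℝ)
    (hx : ∀ n, ‖x n‖ = 1)
    (hxs : ∀ n, ‖xs n‖ ≤ C)
    (hbi : ∀ m n, xs m (x n) = if m = n then 1 else 0)
    (hC : 1 ≤ C)
    (w : ℕ → ℝ)
    (hw_pos : ∀ n, 0 < w n)
    (hw_sum : Summable w)
    (hw_le : ∑' n, w n ≤ C⁻¹)
    (B : X →L[𝕜] X)
    (hB : ∀ z : X, B z = ∑' n : ℕ, ((w n : 𝕜) * xs (n + 1) z) • x n) :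
    ‖B‖ ≤ 1 ∧ ∀ m z, xs m (B z) = (w m : 𝕜) * xs (m + 1) z := by
  have hle : ∀ z n, ‖((w n : 𝕜) * xs (n + 1) z) • x n‖ ≤ w n * (C * ‖z‖) := by
    intro z n
    rw [norm_smul, hx, mul_one, norm_mul, RCLike.norm_ofReal, abs_of_pos (hw_pos n)]
    exact mul_le_mul_of_nonneg_left ((xs (n+1)).le_of_opNorm_le (hxs _) z) (hw_pos n).le
  have hs : ∀ z, Summable fun n => ((w n : 𝕜) * xs (n + 1) z) • x n := fun z =>
    Summable.of_norm_bounded (hw_sum.mul_right _) (hle z)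
  constructor
  · refine ContinuousLinearMap.opNorm_le_bound _ zero_le_one fun z => ?_
    rw [hB]
    refine (tsum_of_norm_bounded (hw_sum.mul_right (C * ‖z‖)).hasSum (hle z)).trans ?_
    rw [tsum_mul_right, ← mul_assoc]
    refine mul_le_mul_of_nonneg_right ?_ (norm_nonneg _)
    calc _ ≤ C⁻¹ * C := mul_le_mul_of_nonneg_right hw_le (by linarith)
      _ = 1 := inv_mul_cancel₀ (by linarith)
  · intro m z
    rw [hB, (xs m).map_tsum (hs z), tsum_eq_single m]
    · simp [hbi]
    · intro n hn
      simp [hbi, hn.symm]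

set_option maxHeartbeats 1000000 in
theorem aux_T (xs : ℕ → X →L[𝕜] 𝕜) (w : ℕ → ℝ) (B : X →L[𝕜] X) (hB1 : ‖B‖ ≤ 1)
    (hB : ∀ m z, xs m (B z) = (w m : 𝕜) * xs (m + 1) z)
    (f : ℕ → 𝕜) (hf : Summable fun k => ‖f k‖) (m : ℕ) (z : X) :
    xs m ((∑' k : ℕ, (f k : 𝕜) • B ^ (k + 1)) z) =
      ∑' k : ℕ, f k * (((∏ l ∈ Finset.range (k + 1), w (m + l) : ℝ) : 𝕜) * xs (m + k + 1) z) := by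
  have hpow : ∀ k m, xs m ((B ^ k) z) =
      ((∏ l ∈ Finset.range k, w (m + l) : ℝ) : 𝕜) * xs (m + k) z := by
    intro k
    induction k with
    | zero => intro m; simp
    | succ k ih =>
      intro m
      rw [pow_succ', mul_apply_eq_comp, hB, ih, Finset.prod_range_succ']
      have : ∀ l, m + 1 + l = m + (l + 1) := fun l => by ring
      simp only [this, add_zero]
      push_cast
      ring
  have hs : Summable fun k => (f k : 𝕜) • B ^ (k + 1) := by
    refine Summable.of_norm_bounded hf fun k => ?_
    rw [norm_smul]
    have : ‖B ^ (k + 1)‖ ≤ 1 := (norm_pow_le' B (Nat.succ_pos k)).trans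
      (pow_le_one₀ (norm_nonneg _) hB1)
    exact mul_le_of_le_one_right (norm_nonneg _) this
  have h1 : (∑' k : ℕ, (f k : 𝕜) • B ^ (k + 1)) z = ∑' k : ℕ, ((f k : 𝕜) • B ^ (k + 1)) z :=
    (ContinuousLinearMap.apply 𝕜 X z).map_tsum hs
  have hs' : Summable fun k => ((f k : 𝕜) • B ^ (k + 1)) z :=
    (ContinuousLinearMap.apply 𝕜 X z).summable hs
  rw [h1, (xs m).map_tsum hs']
  refine tsum_congr fun k => ?_
  rw [ContinuousLinearMap.smul_apply, map_smul, hpow, smul_eq_mul, add_assoc]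

theorem aux_span (x : ℕ → X) (xs : ℕ → X →L[𝕜] 𝕜)
    (hbi : ∀ m n, xs m (x n) = if m = n then 1 else 0) (I : Set ℕ) (z : X)
    (hz : z ∈ Submodule.span 𝕜 (x '' I)) (n : ℕ) (hn : n ∉ I) : xs n z = 0 := by
  have : Submodule.span 𝕜 (x '' I) ≤ LinearMap.ker (xs n : X →ₗ[𝕜] 𝕜) := by
    rw [Submodule.span_le]
    rintro _ ⟨m, hm, rfl⟩
    have : n ≠ m := fun h => hn (h ▸ hm)
    simp [hbi, this]
  exact this hz

theorem aux_expand (x : ℕ → X) (xs : ℕ → X →L[𝕜] 𝕜)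
    (hbi : ∀ m n, xs m (x n) = if m = n then 1 else 0)
    (hsep : ∀ z : X, (∀ n, xs n z = 0) → z = 0) (I : Finset ℕ) (z : X)
    (hz : ∀ n ∉ I, xs n z = 0) : z = ∑ n ∈ I, xs n z • x n := by
  rw [← sub_eq_zero]
  refine hsep _ fun n => ?_
  by_cases h : n ∈ I
  · simp [hbi, h]
  · simp [hbi, h, hz n h]

/-- formula for coordinates -/
theorem aux_fin (xs : ℕ → X →L[𝕜] 𝕜) (w : ℕ → ℝ) (T : X →L[𝕜] X) (f : ℕ → 𝕜)
    (hT : ∀ m z, xs m (T z) =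
      ∑' k : ℕ, f k * (((∏ l ∈ Finset.range (k + 1), w (m + l) : ℝ) : 𝕜) * xs (m + k + 1) z))
    (p : ℕ) (hp' : ∀ k < p, f k = 0) (d m : ℕ) (hm : m < d) (z : X)
    (hz : ∀ n, p + d < n → xs n z = 0) :
    xs m (T z) = f p * (((∏ l ∈ Finset.range (p + 1), w (m + l) : ℝ) : 𝕜) * xs (p + 1 + m) z) +
      ∑ j ∈ Finset.Ico (m + 1) d, f (p + (j - m)) *
        (((∏ l ∈ Finset.range (p + (j - m) + 1), w (m + l) : ℝ) : 𝕜) * xs (p + 1 + j) z) := by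
  rw [hT, tsum_eq_sum (s := Finset.Ico p (p + (d - m)))]
  · rw [Finset.sum_eq_sum_Ico_succ_bot (by omega)]
    congr 1
    · rw [show m + p + 1 = p + 1 + m by ring]
    · refine Finset.sum_nbij' (fun k => k + m - p) (fun j => p + (j - m)) ?_ ?_ ?_ ?_ ?_
      · intro k hk; simp only [Finset.mem_Ico] at *; omega
      · intro k hk; simp only [Finset.mem_Ico] at *; omega
      · intro k hk; simp only [Finset.mem_Ico] at *; omega
      · intro k hk; simp only [Finset.mem_Ico] at *; omega
      · intro k hk
        simp only [Finset.mem_Ico] at hk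
        rw [show p + (k + m - p - m) = k by omega, show p + 1 + (k + m - p) = m + k + 1 by omega]
  · intro k hk
    rw [Finset.mem_Ico] at hk
    by_cases h : k < p
    · simp [hp' k h]
    · rw [hz (m + k + 1) (by omega)]; simp

theorem aux_v (x : ℕ → X) (xs : ℕ → X →L[𝕜] 𝕜)
    (hbi : ∀ m n, xs m (x n) = if m = n then 1 else 0)
    (hsep : ∀ z : X, (∀ n, xs n z = 0) → z = 0)
    (w : ℕ → ℝ) (hw_pos : ∀ n, 0 < w n) (T : X →L[𝕜] X) (f : ℕ → 𝕜)
    (hT : ∀ m z, xs m (T z) =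
      ∑' k : ℕ, f k * (((∏ l ∈ Finset.range (k + 1), w (m + l) : ℝ) : 𝕜) * xs (m + k + 1) z))
    (p : ℕ) (hp : f p ≠ 0) (hp' : ∀ k < p, f k = 0) (j : ℕ) :
    ∃ v ∈ Submodule.span 𝕜 (x '' Set.Icc (p + 1) (p + 1 + j)), T v = x j := by
  induction j using Nat.strong_induction_on with
  | _ j ih =>
  choose! v hv hTv using ih
  have hexp : T (x (p + 1 + j)) = ∑ n ∈ Finset.range (j + 1), xs n (T (x (p + 1 + j))) • x n := by
    refine aux_expand x xs hbi hsep _ _ fun n hn => ?_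
    rw [hT]
    refine (tsum_congr fun k => ?_).trans tsum_zero
    rw [Finset.mem_range] at hn
    by_cases h : k < p
    · simp [hp' k h]
    · rw [hbi, if_neg (by omega)]; simp
  have hc : xs j (T (x (p + 1 + j))) ≠ 0 := by
    rw [aux_fin xs w T f hT p hp' (j + 1) j (by omega)]
    · simp only [Finset.Ico_self, Finset.sum_empty, add_zero, hbi, if_true, mul_one]
      refine mul_ne_zero hp ?_
      exact_mod_cast (Finset.prod_pos fun l _ => hw_pos _).ne'
    · intro n hn
      rw [hbi, if_neg (by omega)]
  set t : ℕ → 𝕜 := fun n => xs n (T (x (p + 1 + j))) with ht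
  refine ⟨(t j)⁻¹ • (x (p + 1 + j) - ∑ n ∈ Finset.range j, t n • v n), ?_, ?_⟩
  · refine Submodule.smul_mem _ _ (Submodule.sub_mem _ (Submodule.subset_span ⟨_, by simp, rfl⟩)
      (Submodule.sum_mem _ fun n hn => Submodule.smul_mem _ _ ?_))
    rw [Finset.mem_range] at hn
    exact Submodule.span_mono (Set.image_mono (Set.Icc_subset_Icc_right (by omega))) (hv n hn)
  · rw [map_smul, map_sub, map_sum, hexp, Finset.sum_range_succ]
    have : ∑ n ∈ Finset.range j, T (t n • v n) = ∑ n ∈ Finset.range j, t n • x n := by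
      refine Finset.sum_congr rfl fun n hn => ?_
      rw [map_smul, hTv n (Finset.mem_range.1 hn)]
    rw [this, add_sub_cancel_left, smul_smul, inv_mul_cancel₀ hc, one_smul]

theorem aux_norm (x : ℕ → X) (xs : ℕ → X →L[𝕜] 𝕜) (C : ℝ)
    (hx : ∀ n, ‖x n‖ = 1)
    (hxs : ∀ n, ‖xs n‖ ≤ C)
    (hbi : ∀ m n, xs m (x n) = if m = n then 1 else 0)
    (hsep : ∀ z : X, (∀ n, xs n z = 0) → z = 0)
    (hC : 1 ≤ C)
    (w : ℕ → ℝ) (hw_pos : ∀ n, 0 < w n) (hw1 : ∀ n, w n ≤ 1) (hw_anti : StrictAnti w)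
    (T : X →L[𝕜] X) (f : ℕ → 𝕜)
    (hT : ∀ m z, xs m (T z) =
      ∑' k : ℕ, f k * (((∏ l ∈ Finset.range (k + 1), w (m + l) : ℝ) : 𝕜) * xs (m + k + 1) z))
    (p : ℕ) (hp : f p ≠ 0) (hp' : ∀ k < p, f k = 0) (d : ℕ) (hd : 1 ≤ d) (z : X)
    (hz : z ∈ Submodule.span 𝕜 (x '' Set.Icc (p + 1) (p + d))) (M : ℝ)
    (hM : ∀ i < d, ‖f (p + i)‖ ≤ M) :
    ‖z‖ ≤ C * (Nat.factorial (d + 1) : ℝ) * M ^ (d - 1) /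
        (‖f p‖ ^ d * (w (p + d)) ^ (d * (p + 1))) * ‖T z‖ := by
  have hzero := aux_span x xs hbi _ z hz
  have ha : 0 < ‖f p‖ := norm_pos_iff.2 hp
  set a := ‖f p‖ with ha_def
  set ω := w (p + d) ^ (p + 1) with hω
  have hω0 : 0 < ω := pow_pos (hw_pos _) _
  have hω1 : ω ≤ 1 := pow_le_one₀ (hw_pos _).le (hw1 _)
  have haM : a ≤ M := hM 0 (by omega)
  have hM0 : 0 < M := by linarith
  have hr : 1 ≤ M / a := (one_le_div ha).2 haM
  set s : ℕ → ℝ := fun j => ‖xs (p + 1 + j) z‖ with hs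
  have hs0 : ∀ j, 0 ≤ s j := fun j => norm_nonneg _
  set K := C * ‖T z‖ / (a * ω) with hK
  have hK0 : 0 ≤ K := by positivity
  have key : ∀ m < d, s m ≤ K + (M / a) * ∑ j ∈ Finset.Ico (m + 1) d, s j := by
    intro m hm
    have e := aux_fin xs w T f hT p hp' d m hm z
      (fun n hn => hzero n (by simp; omega))
    set P := ∏ l ∈ Finset.range (p + 1), w (m + l) with hP
    have hP0 : 0 < P := Finset.prod_pos fun l _ => hw_pos _
    have hPω : ω ≤ P := by
      have := Finset.prod_le_prod (s := Finset.range (p + 1)) (f := fun _ => w (p + d))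
        (g := fun l => w (m + l)) (fun _ _ => (hw_pos _).le)
        (fun l hl => hw_anti.antitone (by rw [Finset.mem_range] at hl; omega))
      simpa [hω] using this
    have e2 : f p * ((P : 𝕜) * xs (p + 1 + m) z) = xs m (T z) -
      ∑ j ∈ Finset.Ico (m + 1) d, f (p + (j - m)) *
        (((∏ l ∈ Finset.range (p + (j - m) + 1), w (m + l) : ℝ) : 𝕜) * xs (p + 1 + j) z) :=
      eq_sub_of_add_eq e.symm
    have e3 : a * (P * s m) = ‖f p * ((P : 𝕜) * xs (p + 1 + m) z)‖ := by
      rw [norm_mul, norm_mul, RCLike.norm_ofReal, abs_of_pos hP0]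
    have e4 : a * (P * s m) ≤ C * ‖T z‖ + ∑ j ∈ Finset.Ico (m + 1) d, M * (P * s j) := by
      rw [e3, e2]
      refine (norm_sub_le _ _).trans (add_le_add ((xs m).le_of_opNorm_le (hxs _) _)
        ((norm_sum_le _ _).trans (Finset.sum_le_sum fun j hj => ?_)))
      rw [Finset.mem_Ico] at hj
      have hQ0 : 0 < ∏ l ∈ Finset.range (p + (j - m) + 1), w (m + l) :=
        Finset.prod_pos fun l _ => hw_pos _
      have hQP : ∏ l ∈ Finset.range (p + (j - m) + 1), w (m + l) ≤ P := by
        rw [show p + (j - m) + 1 = (p + 1) + (j - m) by omega, Finset.prod_range_add]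
        exact mul_le_of_le_one_right hP0.le
          (Finset.prod_le_one (fun _ _ => (hw_pos _).le) fun _ _ => hw1 _)
      rw [norm_mul, norm_mul, RCLike.norm_ofReal, abs_of_pos hQ0]
      exact mul_le_mul (hM _ (by omega)) (mul_le_mul_of_nonneg_right hQP (hs0 j))
        (mul_nonneg hQ0.le (hs0 j)) hM0.le
    rw [← Finset.mul_sum, ← Finset.mul_sum] at e4
    set A := ∑ j ∈ Finset.Ico (m + 1) d, s j
    have e5 : s m ≤ (C * ‖T z‖ + M * (P * A)) / (a * P) := by
      rw [le_div_iff₀ (by positivity)]; linarith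
    have e6 : (C * ‖T z‖ + M * (P * A)) / (a * P) = C * ‖T z‖ / (a * P) + M / a * A := by
      field_simp
    rw [e6] at e5
    refine e5.trans (add_le_add_left ?_ _)
    rw [hK]
    gcongr
  have fin := aux_bound d s (M / a) K hr hK0 hs0 key d le_rfl
  rw [Nat.sub_self] at fin
  have hzs : ‖z‖ ≤ ∑ j ∈ Finset.Ico 0 d, s j := by
    have := aux_expand x xs hbi hsep (Finset.Ico (p + 1) (p + 1 + d)) z
      (fun n hn => hzero n (by simp at *; omega))
    rw [Finset.sum_Ico_eq_sum_range] at this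
    rw [this]
    refine (norm_sum_le _ _).trans (le_of_eq ?_)
    rw [add_tsub_cancel_left, Finset.range_eq_Ico]
    refine Finset.sum_congr rfl fun j _ => ?_
    rw [norm_smul, hx, mul_one]
  have f2 : ‖z‖ ≤ K * 2 ^ d * (M / a) ^ (d - 1) := by
    have h0 : (M / a) ^ d = (M / a) * (M / a) ^ (d - 1) := by
      rw [← pow_succ', Nat.sub_add_cancel hd]
    rw [h0] at fin
    have h1 : (M / a) * ‖z‖ ≤ (M / a) * (K * 2 ^ d * (M / a) ^ (d - 1)) := by
      calc _ ≤ _ := mul_le_mul_of_nonneg_left hzs (by linarith)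
        _ ≤ _ := fin
        _ = (M / a) * (K * 2 ^ d * (M / a) ^ (d - 1)) - K * (M / a * (M / a) ^ (d - 1)) := by ring
        _ ≤ _ := by
          have : 0 ≤ K * (M / a * (M / a) ^ (d - 1)) := by positivity
          linarith
    exact le_of_mul_le_mul_left h1 (by linarith)
  have f3 : (2 : ℝ) ^ d ≤ (Nat.factorial (d + 1) : ℝ) := by exact_mod_cast two_pow_le_fact d
  refine f2.trans ?_
  have f4 : C * (Nat.factorial (d + 1) : ℝ) * M ^ (d - 1) / (a ^ d * (w (p + d)) ^ (d * (p + 1)))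
      * ‖T z‖ = (C * ‖T z‖ / (a * ω ^ d)) * (Nat.factorial (d + 1) : ℝ) * (M / a) ^ (d - 1) := by
    have h0 : a ^ d = a * a ^ (d - 1) := by
      rw [← pow_succ', Nat.sub_add_cancel hd]
    rw [h0, hω, ← pow_mul, mul_comm d (p + 1), div_pow]
    field_simp
  rw [f4, hK]
  have f5 : ω ^ d ≤ ω := pow_le_of_le_one hω0.le hω1 (by omega)
  gcongr

end

/-- (Indices are 0-based: `x n` is the paper's `x_{n+1}`, the coefficient
`f k` multiplies `B_w^{k+1}`, and `f p ≠ 0` with `f k = 0` for `k < p` means the paper's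
`𝔭_λ = p + 1`.  The paper's `X_d = span{x_1, …, x_d}` becomes the span of `x '' Set.Iio d`,
the target `span{x_{𝔭+1}, …, x_{𝔭+d}}` becomes the span of `x '' Set.Icc (p+1) (p+d)`, and
the paper's conclusion `𝔮_{S y} = 𝔭_λ + 𝔮_y` becomes `q_{S y} = p + q_y + 1` for the 0-based
largest support indices.)  For every nonzero `f ∈ ℓ¹` and every `d ≥ 1` there is a linear map
`S : X_d → X` with range in `span{x (p+1), …, x (p+d)}` such that for all `y ∈ X_d`:
(A1) `T_f (S y) = y`;  (B1) `‖S y‖ ≤ F_f(d) · ‖y‖`;  (C1) if `y ≠ 0` then the largest `n`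
with `xs n (S y) ≠ 0` equals `p + q + 1`, where `q` is the largest `n` with `xs n y ≠ 0`. -/
theorem exists_local_right_inverse
    {𝕜 : Type*} [RCLike 𝕜] {X : Type*} [NormedAddCommGroup X] [NormedSpace 𝕜 X]
    [CompleteSpace X]
    (x : ℕ → X) (xs : ℕ → X →L[𝕜] 𝕜) (C : ℝ)
    (hx : ∀ n, ‖x n‖ = 1)
    (hxs : ∀ n, ‖xs n‖ ≤ C)
    (hbi : ∀ m n, xs m (x n) = if m = n then 1 else 0)
    (hdense : Dense (Submodule.span 𝕜 (Set.range x) : Set X))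
    (hsep : ∀ z : X, (∀ n, xs n z = 0) → z = 0)
    (w : ℕ → ℝ)
    (hw_pos : ∀ n, 0 < w n)
    (hw_anti : StrictAnti w)
    (hw_lim : Tendsto w atTop (nhds 0))
    (hw_sum : Summable w)
    (hw_le : ∑' n, w n ≤ C⁻¹)
    (B : X →L[𝕜] X)
    (hB : ∀ z : X, B z = ∑' n : ℕ, ((w n : 𝕜) * xs (n + 1) z) • x n)
    (f : lp (fun _ : ℕ => 𝕜) 1)
    (p : ℕ) (hp : f p ≠ 0) (hp' : ∀ k < p, f k = 0)
    (F : ℕ → ℝ)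
    (hF : ∀ d : ℕ,
      F d = C * (Nat.factorial (d + 1) : ℝ) * (⨆ i : Fin d, ‖f (p + (i : ℕ))‖) ^ (d - 1) /
        (‖f p‖ ^ d * (w (p + d)) ^ (d * (p + 1)))) :
    ∀ d : ℕ, 1 ≤ d →
      ∃ S : (Submodule.span 𝕜 (x '' Set.Iio d)) →ₗ[𝕜] X,
        (∀ y : Submodule.span 𝕜 (x '' Set.Iio d),
          S y ∈ Submodule.span 𝕜 (x '' Set.Icc (p + 1) (p + d))) ∧
        (∀ y : Submodule.span 𝕜 (x '' Set.Iio d),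
          (∑' k : ℕ, (f k : 𝕜) • B ^ (k + 1)) (S y) = (y : X)) ∧
        (∀ y : Submodule.span 𝕜 (x '' Set.Iio d), ‖S y‖ ≤ F d * ‖(y : X)‖) ∧
        (∀ y : Submodule.span 𝕜 (x '' Set.Iio d), (y : X) ≠ 0 →
          ∀ q : ℕ, IsGreatest {n : ℕ | xs n (y : X) ≠ 0} q →
            IsGreatest {n : ℕ | xs n (S y) ≠ 0} (p + q + 1)) := by
  have hC : 1 ≤ C := by
    have h := (xs 0).le_of_opNorm_le (hxs 0) (x 0)
    simpa [hbi, hx] using h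
  have hw1 : ∀ n, w n ≤ 1 := fun n =>
    (hw_sum.le_tsum n fun j _ => (hw_pos j).le).trans (hw_le.trans (inv_le_one_of_one_le₀ hC))
  obtain ⟨hB1, hB2⟩ := aux_B x xs C hx hxs hbi hC w hw_pos hw_sum hw_le B hB
  have hf : Summable fun k => ‖f k‖ := by
    have := (lp.memℓp f).summable (by simp)
    simpa using this
  have hT := aux_T xs w B hB1 hB2 f hf
  generalize (∑' k : ℕ, (f k : 𝕜) • B ^ (k + 1)) = T at hT ⊢
  intro d hd
  choose v hv hTv using aux_v x xs hbi hsep w hw_pos T f hT p hp hp'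
  let S0 : X →ₗ[𝕜] X := ∑ j ∈ Finset.range d, (xs j : X →ₗ[𝕜] 𝕜).smulRight (v j)
  have hS0 : ∀ y, S0 y = ∑ j ∈ Finset.range d, xs j y • v j := by
    intro y; simp [S0]
  have hmem : ∀ y, S0 y ∈ Submodule.span 𝕜 (x '' Set.Icc (p + 1) (p + d)) := by
    intro y
    rw [hS0]
    refine Submodule.sum_mem _ fun n hn => Submodule.smul_mem _ _ ?_
    rw [Finset.mem_range] at hn
    exact Submodule.span_mono (Set.image_mono (Set.Icc_subset_Icc_right (by omega))) (hv n)
  have hinv : ∀ y ∈ Submodule.span 𝕜 (x '' Set.Iio d), T (S0 y) = y := by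
    intro y hy
    have := aux_expand x xs hbi hsep (Finset.range d) y
      (fun n hn => aux_span x xs hbi _ y hy n (by simpa using hn))
    rw [hS0, map_sum]
    conv_rhs => rw [this]
    exact Finset.sum_congr rfl fun n _ => by rw [map_smul, hTv]
  refine ⟨S0.comp (Submodule.subtype _), fun y => hmem y, fun y => hinv y y.2, fun y => ?_, ?_⟩
  · have h := aux_norm x xs C hx hxs hbi hsep hC w hw_pos hw1 hw_anti T f hT p hp hp' d hd
      (S0 y) (hmem y) (⨆ i : Fin d, ‖f (p + (i : ℕ))‖)
      (fun i hi => le_ciSup (f := fun i : Fin d => ‖f (p + (i : ℕ))‖)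
        (Set.finite_range _).bddAbove ⟨i, hi⟩)
    rw [hinv y y.2, ← hF] at h
    exact h
  · rintro ⟨y, hy⟩ _ q ⟨hq, hq'⟩
    simp only [Set.mem_setOf_eq] at hq
    have hqd : q < d := by
      by_contra h
      exact hq (aux_span x xs hbi _ y hy q h)
    have hz : ∀ n, p + (q + 1) < n → xs n (S0 y) = 0 := by
      intro n hn
      rw [hS0, map_sum]
      refine Finset.sum_eq_zero fun j _ => ?_
      rw [map_smul]
      by_cases hj : xs j y = 0
      · simp [hj]
      · have : j ≤ q := hq' hj
        rw [aux_span x xs hbi _ _ (hv j) n (by simp; omega), smul_zero]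
    constructor
    · intro h0
      have h0 : xs (p + q + 1) (S0 y) = 0 := h0
      apply hq
      have e := aux_fin xs w T f hT p hp' (q + 1) q (by omega) (S0 y) hz
      rw [hinv y hy, show p + 1 + q = p + q + 1 by ring, h0] at e
      simpa using e
    · intro n hn
      by_contra h
      exact hn (hz n (by omega))
end

section
/- Let 0 ≠ λ = (λₖ) ∈ ℓ¹. Then there exists a map S_λ : X_∞ → X with S_λ(X_∞) ⊆ X_∞ such that for all k ∈ ℕ and all y ∈ X_∞: (A2) T_λᵏ(S_λᵏ(y)) = y; and (B2) if y ≠ 0 then ‖S_λᵏ(y)‖ ≤ [F_λ(d_k^y)]^k · ‖y‖, where d_k^y := (k−1)·𝔭_λ + 𝔮_y. -/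
open Filter Topology
open scoped ENNReal

noncomputable def vrec {𝕜 X : Type*} [RCLike 𝕜] [NormedAddCommGroup X] [NormedSpace 𝕜 X]
    (a : ℕ → ℕ → 𝕜) (b : ℕ → X) : ℕ → X
  | n => b n - ∑ j : Fin n, a n j • vrec a b j
termination_by n => n
decreasing_by exact j.2

theorem vrec_eq {𝕜 X : Type*} [RCLike 𝕜] [NormedAddCommGroup X] [NormedSpace 𝕜 X]
    (a : ℕ → ℕ → 𝕜) (b : ℕ → X) (n : ℕ) :
    vrec a b n = b n - ∑ j ∈ Finset.range n, a n j • vrec a b j := by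
  rw [vrec, Finset.sum_range (fun j => a n j • vrec a b j)]

theorem growth_aux (t : ℕ → ℝ) (A r : ℝ) (hA : 0 ≤ A) (hr : 1 ≤ r) (d : ℕ)
    (h : ∀ n < d, t n ≤ A + r * ∑ j ∈ Finset.range n, t j) :
    ∀ n < d, t n ≤ A * 2 ^ n * r ^ n := by
  have hs : ∀ n ≤ d, A + r * ∑ j ∈ Finset.range n, t j ≤ A * 2 ^ n * r ^ n := by
    intro n
    induction n with
    | zero => intro _; simp
    | succ n ih =>
      intro hn
      have h1 := ih (by omega)
      have h2 := h n (by omega)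
      rw [Finset.sum_range_succ]
      have h3 : t n ≤ A * 2 ^ n * r ^ n := h2.trans h1
      have h0 : 0 ≤ A * 2 ^ n * r ^ n := by positivity
      have e : A * 2 ^ (n+1) * r ^ (n+1) = 2 * (r * (A * 2 ^ n * r ^ n)) := by ring
      rw [e]
      nlinarith [mul_le_mul_of_nonneg_left h3 (by linarith : (0:ℝ) ≤ r)]
  intro n hn
  exact (h n hn).trans (hs n hn.le)

theorem two_pow_fact (d : ℕ) : (2:ℝ) ^ d ≤ (Nat.factorial (d+1) : ℝ) := by
  induction d with
  | zero => simp
  | succ n ih =>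
    rw [Nat.factorial_succ, pow_succ, mul_comm]
    push_cast
    apply mul_le_mul _ ih (by positivity) (by positivity)
    have : (0:ℝ) ≤ n := Nat.cast_nonneg n
    linarith

/-- (Indices are 0-based: `x n` is the paper's `x_{n+1}`, the coefficient
`f k` multiplies `B_w^{k+1}`, the paper's `𝔭_λ` is `p + 1`, and for `y ≠ 0` with largest
0-based support index `q` the paper's `𝔮_y` is `q + 1`; hence the paper's
`d_k^y = (k-1)·𝔭_λ + 𝔮_y` becomes `(k-1)·(p+1) + (q+1)`.  `X_∞` is the span of the `x n`.)
For every nonzero `f ∈ ℓ¹` there is a map `S : X_∞ → X_∞` (so in particular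
`S(X_∞) ⊆ X_∞`) such that for every `k ≥ 1` and every `y ∈ X_∞`:
(A2) `T_fᵏ (Sᵏ y) = y`; and (B2) if `y ≠ 0` then
`‖Sᵏ y‖ ≤ (F_f((k-1)(p+1) + q+1))ᵏ · ‖y‖`. -/
theorem exists_right_inverse_on_span
    {𝕜 : Type*} [RCLike 𝕜] {X : Type*} [NormedAddCommGroup X] [NormedSpace 𝕜 X]
    [CompleteSpace X]
    (x : ℕ → X) (xs : ℕ → X →L[𝕜] 𝕜) (C : ℝ)
    (hx : ∀ n, ‖x n‖ = 1)
    (hxs : ∀ n, ‖xs n‖ ≤ C)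
    (hbi : ∀ m n, xs m (x n) = if m = n then 1 else 0)
    (hdense : Dense (Submodule.span 𝕜 (Set.range x) : Set X))
    (hsep : ∀ z : X, (∀ n, xs n z = 0) → z = 0)
    (w : ℕ → ℝ)
    (hw_pos : ∀ n, 0 < w n)
    (hw_anti : StrictAnti w)
    (hw_lim : Tendsto w atTop (nhds 0))
    (hw_sum : Summable w)
    (hw_le : ∑' n, w n ≤ C⁻¹)
    (B : X →L[𝕜] X)
    (hB : ∀ z : X, B z = ∑' n : ℕ, ((w n : 𝕜) * xs (n + 1) z) • x n)
    (f : lp (fun _ : ℕ => 𝕜) 1)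
    (p : ℕ) (hp : f p ≠ 0) (hp' : ∀ k < p, f k = 0)
    (F : ℕ → ℝ)
    (hF : ∀ d : ℕ,
      F d = C * (Nat.factorial (d + 1) : ℝ) * (⨆ i : Fin d, ‖f (p + (i : ℕ))‖) ^ (d - 1) /
        (‖f p‖ ^ d * (w (p + d)) ^ (d * (p + 1)))) :
    ∃ S : (Submodule.span 𝕜 (Set.range x)) → (Submodule.span 𝕜 (Set.range x)),
      ∀ k : ℕ, 1 ≤ k → ∀ y : Submodule.span 𝕜 (Set.range x),
        (((∑' j : ℕ, (f j : 𝕜) • B ^ (j + 1)) ^ k) ((S^[k] y : Submodule.span 𝕜 (Set.range x)) : X)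
            = (y : X)) ∧
        ((y : X) ≠ 0 → ∀ q : ℕ, IsGreatest {n : ℕ | xs n (y : X) ≠ 0} q →
          ‖((S^[k] y : Submodule.span 𝕜 (Set.range x)) : X)‖ ≤
            (F ((k - 1) * (p + 1) + (q + 1))) ^ k * ‖(y : X)‖) := by
  classical
  set T : X →L[𝕜] X := ∑' j : ℕ, (f j : 𝕜) • B ^ (j + 1) with hT
  -- basic facts
  have hC1 : 1 ≤ C := by
    have h := (xs 0).le_opNorm (x 0)
    rw [hbi, hx] at h
    simp at h
    exact h.trans (hxs 0)
  have hC0 : 0 < C := by linarith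
  have hxsle : ∀ n z, ‖xs n z‖ ≤ C * ‖z‖ := fun n z =>
    ((xs n).le_opNorm z).trans (mul_le_mul_of_nonneg_right (hxs n) (norm_nonneg _))
  have hw1 : ∀ n, w n ≤ 1 := fun n =>
    (hw_sum.le_tsum n (fun j _ => (hw_pos j).le)).trans (hw_le.trans (inv_le_one_of_one_le₀ hC1))
  have hBn : ‖B‖ ≤ 1 := by
    refine B.opNorm_le_bound zero_le_one (fun z => ?_)
    rw [hB]
    have hs : HasSum (fun n => w n * (C * ‖z‖)) ((∑' n, w n) * (C * ‖z‖)) := hw_sum.hasSum.mul_right _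
    refine (tsum_of_norm_bounded hs (fun n => ?_)).trans ?_
    · rw [norm_smul, norm_mul, hx, mul_one, RCLike.norm_ofReal, abs_of_pos (hw_pos n)]
      exact mul_le_mul_of_nonneg_left (hxsle _ _) (hw_pos n).le
    · calc (∑' n, w n) * (C * ‖z‖) ≤ C⁻¹ * (C * ‖z‖) :=
            mul_le_mul_of_nonneg_right hw_le (by positivity)
        _ = 1 * ‖z‖ := by field_simp
  have hfs : Summable (fun j => ‖f j‖) := by
    have := (lp.memℓp f).summable (p := 1) (by simp)
    simpa using this
  have hTs : Summable (fun j : ℕ => (f j : 𝕜) • B ^ (j + 1)) := by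
    refine Summable.of_norm_bounded hfs (fun j => ?_)
    rw [norm_smul]
    have h1 : ‖B ^ (j+1)‖ ≤ 1 :=
      (norm_pow_le' B (Nat.succ_pos j)).trans (pow_le_one₀ (norm_nonneg _) hBn)
    calc _ ≤ ‖f j‖ * 1 := mul_le_mul_of_nonneg_left h1 (norm_nonneg _)
      _ = _ := mul_one _
  have hTz : ∀ z, T z = ∑' j : ℕ, (f j : 𝕜) • (B ^ (j + 1)) z := by
    intro z
    have := (ContinuousLinearMap.apply 𝕜 X z).map_tsum hTs
    simpa using this
  have hB0 : B (x 0) = 0 := by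
    rw [hB]; simp [hbi]
  have hBs : ∀ n, B (x (n+1)) = (w n : 𝕜) • x n := by
    intro n
    rw [hB, tsum_eq_single n]
    · simp [hbi]
    · intro m hm
      simp [hbi, hm]
  let W : ℕ → ℝ := fun n => ∏ i ∈ Finset.range n, w i
  have hWpos : ∀ n, 0 < W n := fun n => Finset.prod_pos (fun i _ => hw_pos i)
  have hWs : ∀ n, W (n+1) = W n * w n := fun n => Finset.prod_range_succ _ _
  have hWne : ∀ n, (W n : 𝕜) ≠ 0 := fun n => by exact_mod_cast (hWpos n).ne'
  have hWanti : Antitone W := antitone_nat_of_succ_le (fun n => by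
    rw [hWs]; exact mul_le_of_le_one_right (hWpos n).le (hw1 n))
  have hBk : ∀ k n, (B ^ k) (x (n + k)) = ((W (n+k) / W n : ℝ) : 𝕜) • x n := by
    intro k
    induction k with
    | zero => intro n; simp [div_self (hWpos n).ne']
    | succ k ih =>
      intro n
      rw [pow_succ, ContinuousLinearMap.mul_apply, ← add_assoc, hBs, map_smul, ih, smul_smul, hWs,
        ← RCLike.ofReal_mul]
      congr 2
      ring
  have hBk0 : ∀ k n, n < k → (B ^ k) (x n) = 0 := by
    intro k
    induction k with
    | zero => intro n h; omega
    | succ k ih =>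
      intro n h
      rw [pow_succ, ContinuousLinearMap.mul_apply]
      cases n with
      | zero => rw [hB0, map_zero]
      | succ n => rw [hBs, map_smul, ih n (by omega), smul_zero]
  have hTx : ∀ N, T (x (N + p + 1)) =
      ∑ j ∈ Finset.range (N+1), (f (p + (N - j)) * ((W (N+p+1) / W j : ℝ) : 𝕜)) • x j := by
    intro N
    rw [hTz, tsum_eq_sum (s := Finset.range (N+p+1))]
    · rw [← Finset.sum_range_reflect]
      symm
      apply Finset.sum_subset_zero_on_sdiff
      · intro i; simp only [Finset.mem_range]; omega
      · intro j hj
        simp only [Finset.mem_sdiff, Finset.mem_range] at hj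
        rw [hp' _ (by omega), zero_smul]
      · intro j hj
        simp only [Finset.mem_range] at hj
        have e1 : N + p + 1 - 1 - j = p + (N - j) := by omega
        have e2 : N + p + 1 = j + (p + (N - j) + 1) := by omega
        rw [e1, mul_smul]
        congr 1
        have h := hBk (p + (N - j) + 1) j
        rw [← e2] at h
        exact h.symm
    · intro j hj
      simp only [Finset.mem_range] at hj
      rw [hBk0 _ _ (by omega), smul_zero]
  let a : ℕ → ℕ → 𝕜 := fun n j => (f p)⁻¹ * (f (p + (n - j)) * ((W n / W j : ℝ) : 𝕜))
  let b : ℕ → X := fun n => ((f p)⁻¹ * ((W n / W (n+p+1) : ℝ) : 𝕜)) • x (n + p + 1)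
  let v : ℕ → X := vrec a b
  have hv : ∀ n, v n = b n - ∑ j ∈ Finset.range n, a n j • v j := vrec_eq a b
  have hTv : ∀ n, T (v n) = x n := by
    intro n
    induction n using Nat.strong_induction_on with
    | _ n ih =>
      rw [hv, map_sub, map_sum]
      have h1 : ∑ j ∈ Finset.range n, T (a n j • v j) = ∑ j ∈ Finset.range n, a n j • x j :=
        Finset.sum_congr rfl (fun j hj => by rw [map_smul, ih j (Finset.mem_range.1 hj)])
      have h2 : T (b n) = ∑ j ∈ Finset.range (n+1), a n j • x j := by
        simp only [b]
        rw [map_smul, hTx, Finset.smul_sum]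
        refine Finset.sum_congr rfl (fun j _ => ?_)
        rw [smul_smul]
        congr 1
        simp only [a]
        have := hWne (n+p+1)
        have := hWne j
        push_cast
        field_simp
      rw [h1, h2, Finset.sum_range_succ, add_sub_cancel_left]
      simp only [a, Nat.sub_self, add_zero, div_self (hWpos n).ne']
      rw [RCLike.ofReal_one, mul_one, inv_mul_cancel₀ hp, one_smul]
  have hvspan : ∀ n, v n ∈ Submodule.span 𝕜 (Set.range x) := by
    intro n
    induction n using Nat.strong_induction_on with
    | _ n ih =>
      rw [hv]
      refine Submodule.sub_mem _ (Submodule.smul_mem _ _ (Submodule.subset_span ⟨_, rfl⟩)) ?_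
      exact Submodule.sum_mem _ (fun j hj => Submodule.smul_mem _ _ (ih j (Finset.mem_range.1 hj)))
  have hvsupp : ∀ n m, n + p + 1 < m → xs m (v n) = 0 := by
    intro n
    induction n using Nat.strong_induction_on with
    | _ n ih =>
      intro m hm
      rw [hv, map_sub, map_sum]
      have h1 : xs m (b n) = 0 := by
        simp only [b]
        rw [map_smul, hbi, if_neg (by omega), smul_zero]
      rw [h1, Finset.sum_eq_zero, sub_zero]
      intro j hj
      have := Finset.mem_range.1 hj
      rw [map_smul, ih j this m (by omega), smul_zero]
  -- finite support
  have hfin : ∀ y ∈ Submodule.span 𝕜 (Set.range x), ∃ N, ∀ n, N ≤ n → xs n y = 0 := by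
    intro y hy
    induction hy using Submodule.span_induction with
    | mem y h =>
      obtain ⟨i, rfl⟩ := h
      exact ⟨i+1, fun n hn => by rw [hbi, if_neg (by omega)]⟩
    | zero => exact ⟨0, fun n _ => map_zero _⟩
    | add y z _ _ h1 h2 =>
      obtain ⟨N, h1⟩ := h1
      obtain ⟨M, h2⟩ := h2
      exact ⟨max N M, fun n hn => by
        rw [map_add, h1 n (le_trans (le_max_left _ _) hn), h2 n (le_trans (le_max_right _ _) hn), add_zero]⟩
    | smul c y _ h =>
      obtain ⟨N, h⟩ := h
      exact ⟨N, fun n hn => by rw [map_smul, h n hn, smul_zero]⟩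
  have hexp : ∀ y N, (∀ n, N ≤ n → xs n y = 0) → ∑ n ∈ Finset.range N, xs n y • x n = y := by
    intro y N h
    rw [← sub_eq_zero]
    apply hsep
    intro n
    rw [map_sub, map_sum]
    simp only [map_smul, hbi, smul_eq_mul, mul_ite, mul_one, mul_zero, Finset.sum_ite_eq,
      Finset.mem_range]
    split_ifs with hn
    · exact sub_self _
    · rw [h n (by omega), sub_zero]
  let S0 : X → X := fun y => ∑' n, xs n y • v n
  have hS0 : ∀ y N, (∀ n, N ≤ n → xs n y = 0) → S0 y = ∑ n ∈ Finset.range N, xs n y • v n := by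
    intro y N h
    refine tsum_eq_sum (fun n hn => ?_)
    rw [h n (by simpa using hn), zero_smul]
  have hS0span : ∀ y ∈ Submodule.span 𝕜 (Set.range x), S0 y ∈ Submodule.span 𝕜 (Set.range x) := by
    intro y hy
    obtain ⟨N, hN⟩ := hfin y hy
    rw [hS0 y N hN]
    exact Submodule.sum_mem _ (fun j _ => Submodule.smul_mem _ _ (hvspan j))
  have hTS : ∀ y ∈ Submodule.span 𝕜 (Set.range x), T (S0 y) = y := by
    intro y hy
    obtain ⟨N, hN⟩ := hfin y hy
    rw [hS0 y N hN, map_sum]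
    simp only [map_smul, hTv]
    exact hexp y N hN
  have hSsupp : ∀ y N, (∀ n, N ≤ n → xs n y = 0) → ∀ n, N + (p + 1) ≤ n → xs n (S0 y) = 0 := by
    intro y N h n hn
    rw [hS0 y N h, map_sum]
    refine Finset.sum_eq_zero (fun j hj => ?_)
    have := Finset.mem_range.1 hj
    rw [map_smul, hvsupp j n (by omega), smul_zero]
  -- norm bound
  have hm : 0 < ‖f p‖ := norm_pos_iff.2 hp
  have hbound : ∀ d, 1 ≤ d → ∀ y, (∀ n, d ≤ n → xs n y = 0) → ‖S0 y‖ ≤ F d * ‖y‖ := by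
    intro d hd y hy
    set M : ℝ := ⨆ i : Fin d, ‖f (p + (i : ℕ))‖ with hM
    have hMle : ∀ i < d, ‖f (p + i)‖ ≤ M := fun i hi =>
      le_ciSup (f := fun i : Fin d => ‖f (p + (i : ℕ))‖) (Set.finite_range _).bddAbove ⟨i, hi⟩
    have hmM : ‖f p‖ ≤ M := by simpa using hMle 0 hd
    set ω := w (p + d) with hω
    have hωpos : 0 < ω := hw_pos _
    have hω1 : ω ≤ 1 := hw1 _
    set r := M / ‖f p‖ with hr
    have hr1 : 1 ≤ r := (one_le_div hm).2 hmM
    set A := ‖f p‖⁻¹ * (ω ^ (p+1))⁻¹ with hAdef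
    have hA : 0 ≤ A := by positivity
    have hWr : ∀ n < d, W n / W (n + p + 1) ≤ (ω ^ (p+1))⁻¹ := by
      intro n hn
      have h1 : ∀ t ≤ p + 1, W n * ω ^ t ≤ W (n + t) := by
        intro t
        induction t with
        | zero => intro _; simp
        | succ t ih =>
          intro ht
          rw [← add_assoc, hWs, pow_succ, ← mul_assoc]
          exact mul_le_mul (ih (by omega)) (hw_anti.antitone (by omega)) hωpos.le (hWpos _).le
      have h2 := h1 (p+1) le_rfl
      rw [div_le_iff₀ (hWpos _), inv_mul_eq_div, le_div_iff₀ (by positivity)]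
      exact h2
    have hvn : ∀ n < d, ‖v n‖ ≤ A + r * ∑ j ∈ Finset.range n, ‖v j‖ := by
      intro n hn
      rw [hv]
      refine (norm_sub_le _ _).trans (add_le_add ?_ ?_)
      · simp only [b]
        rw [norm_smul, hx, mul_one, norm_mul, norm_inv, RCLike.norm_ofReal,
          abs_of_pos (div_pos (hWpos _) (hWpos _))]
        exact mul_le_mul_of_nonneg_left (hWr n hn) (by positivity)
      · rw [Finset.mul_sum]
        refine (norm_sum_le _ _).trans (Finset.sum_le_sum (fun j hj => ?_))
        have hj := Finset.mem_range.1 hj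
        rw [norm_smul]
        refine mul_le_mul_of_nonneg_right ?_ (norm_nonneg _)
        simp only [a]
        rw [norm_mul, norm_mul, norm_inv, RCLike.norm_ofReal,
          abs_of_pos (div_pos (hWpos _) (hWpos _)), hr, div_eq_inv_mul M]
        refine mul_le_mul_of_nonneg_left ?_ (by positivity)
        have h3 : W n / W j ≤ 1 := (div_le_one (hWpos j)).2 (hWanti hj.le)
        have h4 : ‖f (p + (n - j))‖ ≤ M := hMle _ (by omega)
        have h5 : 0 ≤ W n / W j := (div_pos (hWpos n) (hWpos j)).le
        calc ‖f (p + (n - j))‖ * (W n / W j) ≤ M * 1 := mul_le_mul h4 h3 h5 (hm.le.trans hmM)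
          _ = M := mul_one _
    have hv2 := growth_aux (fun n => ‖v n‖) A r hA hr1 d hvn
    have hgeo : ∑ n ∈ Finset.range d, (2:ℝ)^n ≤ 2 ^ d := by
      rw [geom_sum_eq (by norm_num)]
      norm_num
    have hF' : C * (A * r ^ (d-1) * Nat.factorial (d+1)) ≤ F d := by
      rw [hF, ← hM, ← hω]
      obtain ⟨e, rfl⟩ : ∃ e, d = e + 1 := ⟨d - 1, by omega⟩
      have h1 : (ω ^ (p+1))⁻¹ ≤ (ω ^ ((e+1) * (p+1)))⁻¹ := by
        apply inv_anti₀ (by positivity)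
        exact pow_le_pow_of_le_one hωpos.le hω1 (Nat.le_mul_of_pos_left _ (by omega))
      have hM0 : 0 < M := hm.trans_le hmM
      have e1 : C * (A * r ^ (e+1-1) * Nat.factorial (e+1+1)) =
        (C * Nat.factorial (e+1+1) * M ^ e / ‖f p‖^(e+1)) * (ω ^ (p+1))⁻¹ := by
        rw [hAdef, hr, Nat.add_sub_cancel, div_pow, pow_succ (‖f p‖) e]
        field_simp
      rw [e1, Nat.add_sub_cancel, ← div_div, div_eq_mul_inv _ (ω ^ ((e+1) * (p+1)))]
      exact mul_le_mul_of_nonneg_left h1 (by positivity)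
    rw [hS0 y d hy]
    calc ‖∑ n ∈ Finset.range d, xs n y • v n‖
        ≤ ∑ n ∈ Finset.range d, ‖xs n y • v n‖ := norm_sum_le _ _
      _ ≤ ∑ n ∈ Finset.range d, (C * ‖y‖ * (A * r ^ (d-1))) * 2 ^ n := by
          refine Finset.sum_le_sum (fun n hn => ?_)
          have hn := Finset.mem_range.1 hn
          rw [norm_smul, mul_assoc (C * ‖y‖)]
          refine mul_le_mul (hxsle _ _) ?_ (norm_nonneg _) (by positivity)
          refine (hv2 n hn).trans ?_
          rw [mul_right_comm]
          refine mul_le_mul_of_nonneg_right ?_ (by positivity)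
          exact mul_le_mul_of_nonneg_left (pow_le_pow_right₀ hr1 (by omega)) hA
      _ = (C * ‖y‖ * (A * r ^ (d-1))) * ∑ n ∈ Finset.range d, 2 ^ n := by rw [Finset.mul_sum]
      _ ≤ (C * ‖y‖ * (A * r ^ (d-1))) * Nat.factorial (d+1) :=
          mul_le_mul_of_nonneg_left (hgeo.trans (two_pow_fact d)) (by positivity)
      _ = C * (A * r ^ (d-1) * Nat.factorial (d+1)) * ‖y‖ := by ring
      _ ≤ F d * ‖y‖ := mul_le_mul_of_nonneg_right hF' (norm_nonneg _)
  let S : (Submodule.span 𝕜 (Set.range x)) → (Submodule.span 𝕜 (Set.range x)) :=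
    fun y => ⟨S0 y, hS0span y y.2⟩
  have hSval : ∀ y, ((S y : Submodule.span 𝕜 (Set.range x)) : X) = S0 y := fun y => rfl
  refine ⟨S, fun k hk y => ⟨?_, ?_⟩⟩
  · clear hk
    induction k with
    | zero => simp
    | succ k ih =>
      rw [Function.iterate_succ_apply', pow_succ, ContinuousLinearMap.mul_apply, hSval,
        hTS _ (S^[k] y).2, ih]
  · intro _ q hq
    have hsupp : ∀ j n, j * (p+1) + (q+1) ≤ n → xs n (S^[j] y : X) = 0 := by
      intro j
      induction j with
      | zero =>
        intro n hn
        by_contra h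
        have := hq.2 h
        omega
      | succ j ih =>
        intro n hn
        rw [Function.iterate_succ_apply', hSval]
        refine hSsupp _ _ ih n ?_
        rw [Nat.succ_mul] at hn
        omega
    set d := (k - 1) * (p + 1) + (q + 1) with hd
    have hF0 : 0 ≤ F d := by
      rw [hF]
      have : 0 ≤ ⨆ i : Fin d, ‖f (p + (i : ℕ))‖ := Real.iSup_nonneg (fun _ => norm_nonneg _)
      have := hw_pos (p + d)
      positivity
    have key : ∀ j ≤ k, ‖(S^[j] y : X)‖ ≤ F d ^ j * ‖(y : X)‖ := by
      intro j
      induction j with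
      | zero => intro _; simp
      | succ j ih =>
        intro hj
        rw [Function.iterate_succ_apply', hSval]
        have h1 := hbound d (by omega) (S^[j] y : X) (fun n hn => hsupp j n (by
          have : j * (p+1) ≤ (k-1) * (p+1) := Nat.mul_le_mul_right _ (by omega)
          omega))
        refine h1.trans ?_
        rw [pow_succ', mul_assoc]
        exact mul_le_mul_of_nonneg_left (ih (by omega)) hF0
    exact key k le_rfl
end

section
/- Suppose (λ^m)ₘ ⊆ ℓ¹, U ∈ L(X), U ≠ 0, and ‖T_{λ^m} − U‖ → 0 as m → ∞. Writing λ^m = (λₖ^m)ₖ, there exists k₀ ∈ ℕ such that: (A3) for each k ∈ ℕ the sequence (λₖ^m)ₘ converges in 𝕂; (B3) lim_{m→∞} |λ_{k₀}^m| > 0 and lim_{m→∞} λₖ^m = 0 for every k < k₀; and (C3) ‖Σ_{k=k₀}^∞ λₖ^m·B_wᵏ − U‖ → 0 as m → ∞. -/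
open Filter Topology
open scoped ENNReal

/-- (Indices are 0-based: the coefficient `lam m k` multiplies `B_w^{k+1}`,
matching the paper's `λ_k^m B_w^k` for `k ≥ 1`; the tail `Σ_{k ≥ k₀} λ_k^m B_w^k` becomes
`Σ_k lam m (k₀ + k) • B_w^{k₀+k+1}`.)  Suppose `T_{lam m} → U ≠ 0` in operator norm.
Then there is `k₀` such that: (A3) `(lam m k)ₘ` converges for each `k`;
(B3) `limₘ |lam m k₀| > 0` and `limₘ lam m k = 0` for every `k < k₀`; and
(C3) `‖Σ_{k ≥ k₀} lam m k • B_wᵏ − U‖ → 0`. -/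
theorem exists_first_nonvanishing_limit_coefficient
    {𝕜 : Type*} [RCLike 𝕜] {X : Type*} [NormedAddCommGroup X] [NormedSpace 𝕜 X]
    [CompleteSpace X]
    (x : ℕ → X) (xs : ℕ → X →L[𝕜] 𝕜) (C : ℝ)
    (hx : ∀ n, ‖x n‖ = 1)
    (hxs : ∀ n, ‖xs n‖ ≤ C)
    (hbi : ∀ m n, xs m (x n) = if m = n then 1 else 0)
    (hdense : Dense (Submodule.span 𝕜 (Set.range x) : Set X))
    (hsep : ∀ z : X, (∀ n, xs n z = 0) → z = 0)
    (w : ℕ → ℝ)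
    (hw_pos : ∀ n, 0 < w n)
    (hw_anti : StrictAnti w)
    (hw_lim : Tendsto w atTop (nhds 0))
    (hw_sum : Summable w)
    (hw_le : ∑' n, w n ≤ C⁻¹)
    (B : X →L[𝕜] X)
    (hB : ∀ z : X, B z = ∑' n : ℕ, ((w n : 𝕜) * xs (n + 1) z) • x n)
    (lam : ℕ → lp (fun _ : ℕ => 𝕜) 1)
    (U : X →L[𝕜] X) (hU : U ≠ 0)
    (hconv : Tendsto
      (fun m => ‖(∑' k : ℕ, (lam m k : 𝕜) • B ^ (k + 1)) - U‖) atTop (nhds 0)) :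
    ∃ k₀ : ℕ,
      (∀ k : ℕ, ∃ L : 𝕜, Tendsto (fun m => (lam m k : 𝕜)) atTop (nhds L)) ∧
      ((∃ L : ℝ, 0 < L ∧ Tendsto (fun m => ‖(lam m k₀ : 𝕜)‖) atTop (nhds L)) ∧
        ∀ k < k₀, Tendsto (fun m => (lam m k : 𝕜)) atTop (nhds (0 : 𝕜))) ∧
      Tendsto
        (fun m => ‖(∑' k : ℕ, (lam m (k₀ + k) : 𝕜) • B ^ (k₀ + k + 1)) - U‖)
        atTop (nhds 0) := by
  have hC1 : 1 ≤ C := by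
    have h1 := (xs 0).le_opNorm (x 0)
    rw [hbi, hx] at h1
    simp at h1
    exact h1.trans (hxs 0)
  have hC : 0 < C := by linarith
  have hBn : ‖B‖ ≤ 1 := by
    refine B.opNorm_le_bound zero_le_one fun z => ?_
    have hb : ∀ n, ‖((w n : 𝕜) * xs (n + 1) z) • x n‖ ≤ w n * (C * ‖z‖) := by
      intro n
      rw [norm_smul, hx, mul_one, norm_mul, RCLike.norm_ofReal, abs_of_pos (hw_pos n)]
      exact mul_le_mul_of_nonneg_left ((xs (n+1)).le_of_opNorm_le (hxs _) z) (hw_pos n).le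
    rw [hB]
    refine (tsum_of_norm_bounded (hw_sum.mul_right (C * ‖z‖)).hasSum hb).trans ?_
    rw [tsum_mul_right]
    calc (∑' n, w n) * (C * ‖z‖) ≤ C⁻¹ * (C * ‖z‖) := by gcongr
      _ = 1 * ‖z‖ := by field_simp
  have hBpow : ∀ k : ℕ, ‖B ^ (k + 1)‖ ≤ 1 := fun k =>
    (norm_pow_le' B k.succ_pos).trans (pow_le_one₀ (norm_nonneg _) hBn)
  have hB0 : B (x 0) = 0 := by
    rw [hB]
    simp [hbi]
  have hBs : ∀ n, B (x (n + 1)) = (w n : 𝕜) • x n := by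
    intro n
    rw [hB, tsum_eq_single n]
    · simp [hbi]
    · intro k hk
      simp [hbi, hk]
  have hvan : ∀ n j, n < j → (B ^ j) (x n) = 0 := by
    intro n
    induction n with
    | zero =>
      intro j hj
      obtain ⟨j, rfl⟩ := Nat.exists_eq_succ_of_ne_zero hj.ne'
      simp [pow_succ, hB0]
    | succ n ih =>
      intro j hj
      obtain ⟨j, rfl⟩ := Nat.exists_eq_succ_of_ne_zero (Nat.ne_zero_of_lt hj)
      simp [pow_succ, hBs, ih j (by omega)]
  have hcoef : ∀ n j, xs 0 ((B ^ j) (x n)) =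
      if j = n then ∏ i ∈ Finset.range n, (w i : 𝕜) else 0 := by
    intro n
    induction n with
    | zero =>
      intro j
      cases j with
      | zero => simp [hbi]
      | succ j => simp [pow_succ, hB0]
    | succ n ih =>
      intro j
      cases j with
      | zero => simp [hbi]
      | succ j =>
        have h := ih j
        rw [pow_succ, ContinuousLinearMap.mul_apply, hBs, map_smul, map_smul, h,
          Finset.prod_range_succ]
        simp [mul_comm]
  have hWne : ∀ n, (∏ i ∈ Finset.range n, (w i : 𝕜)) ≠ 0 := fun n =>
    Finset.prod_ne_zero_iff.mpr fun i _ => by exact_mod_cast (hw_pos i).ne'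
  have hsum : ∀ m, Summable (fun k : ℕ => (lam m k : 𝕜) • B ^ (k + 1)) := by
    intro m
    have h1 : Summable (fun k => ‖(lam m k : 𝕜)‖) := by
      have := (lp.memℓp (lam m)).summable (by simp)
      simpa using this
    refine Summable.of_norm_bounded h1 fun k => ?_
    rw [norm_smul]
    exact mul_le_of_le_one_right (norm_nonneg _) (hBpow k)
  have hT : Tendsto (fun m => ∑' k : ℕ, (lam m k : 𝕜) • B ^ (k + 1)) atTop (nhds U) :=
    tendsto_iff_norm_sub_tendsto_zero.mpr hconv
  have hTz : ∀ z, Tendsto (fun m => (∑' k : ℕ, (lam m k : 𝕜) • B ^ (k + 1)) z) atTop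
      (nhds (U z)) := fun z =>
    ((ContinuousLinearMap.apply 𝕜 X z).continuous.tendsto U).comp hT
  have hTap : ∀ m z, HasSum (fun k : ℕ => (lam m k : 𝕜) • (B ^ (k + 1)) z)
      ((∑' k : ℕ, (lam m k : 𝕜) • B ^ (k + 1)) z) := by
    intro m z
    simpa using (hsum m).hasSum.mapL (ContinuousLinearMap.apply 𝕜 X z)
  have hlim : ∀ k, Tendsto (fun m => (lam m k : 𝕜)) atTop
      (nhds (xs 0 (U (x (k + 1))) / ∏ i ∈ Finset.range (k + 1), (w i : 𝕜))) := by
    intro k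
    have h1 := (((xs 0).continuous.tendsto _).comp (hTz (x (k + 1)))).div_const
      (∏ i ∈ Finset.range (k + 1), (w i : 𝕜))
    refine h1.congr fun m => ?_
    have h2 := (hTap m (x (k + 1))).mapL (xs 0)
    have h3 : HasSum (fun j : ℕ => xs 0 ((lam m j : 𝕜) • (B ^ (j + 1)) (x (k + 1))))
        ((lam m k : 𝕜) * ∏ i ∈ Finset.range (k + 1), (w i : 𝕜)) := by
      convert hasSum_single k ?_ using 1
      · rw [map_smul, hcoef]; simp
      · intro j hj
        rw [map_smul, hcoef]; simp [hj]
    have h4 := h2.unique h3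
    simp only [Function.comp]
    rw [h4, mul_div_cancel_right₀ _ (hWne _)]
  have hex : ∃ k, xs 0 (U (x (k + 1))) / ∏ i ∈ Finset.range (k + 1), (w i : 𝕜) ≠ 0 := by
    by_contra hcon
    push Not at hcon
    have hl0 : ∀ k, Tendsto (fun m => (lam m k : 𝕜)) atTop (nhds 0) := fun k => by
      have := hlim k
      rwa [hcon k] at this
    have hUx : ∀ n, U (x n) = 0 := by
      intro n
      refine tendsto_nhds_unique (hTz (x n)) ?_
      have h1 : Tendsto (fun m => ∑ k ∈ Finset.range n, (lam m k : 𝕜) • (B ^ (k + 1)) (x n))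
          atTop (nhds (∑ k ∈ Finset.range n, (0 : 𝕜) • (B ^ (k + 1)) (x n))) :=
        tendsto_finsetSum _ fun k _ => (hl0 k).smul_const _
      simp only [zero_smul, Finset.sum_const_zero] at h1
      refine h1.congr fun m => ?_
      refine HasSum.unique (hasSum_sum_of_ne_finset_zero fun k hk => ?_) (hTap m (x n))
      rw [hvan n (k + 1) (by simp at hk; omega), smul_zero]
    apply hU
    refine ContinuousLinearMap.ext_on hdense ?_
    rintro _ ⟨n, rfl⟩
    simp [hUx]
  classical
  have hlt : ∀ k < Nat.find hex, Tendsto (fun m => (lam m k : 𝕜)) atTop (nhds (0 : 𝕜)) := by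
    intro k hk
    have h1 := Nat.find_min hex hk
    have h2 := hlim k
    rwa [not_not.mp h1] at h2
  refine ⟨Nat.find hex, fun k => ⟨_, hlim k⟩,
    ⟨⟨_, norm_pos_iff.mpr (Nat.find_spec hex), (hlim _).norm⟩, hlt⟩, ?_⟩
  generalize Nat.find hex = k₀ at hlt
  rw [← tendsto_iff_norm_sub_tendsto_zero]
  have h1 : Tendsto (fun m => ∑ k ∈ Finset.range k₀, (lam m k : 𝕜) • B ^ (k + 1))
      atTop (nhds (∑ k ∈ Finset.range k₀, (0 : 𝕜) • B ^ (k + 1))) :=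
    tendsto_finsetSum _ fun k hk => (hlt k (Finset.mem_range.mp hk)).smul_const _
  simp only [zero_smul, Finset.sum_const_zero] at h1
  have h2 := hT.sub h1
  rw [sub_zero] at h2
  refine h2.congr fun m => ?_
  rw [← (hsum m).sum_add_tsum_nat_add k₀, add_sub_cancel_left]
  refine tsum_congr fun k => ?_
  rw [add_comm k k₀]
end

section
/- Suppose (λ^m)ₘ ⊆ ℓ¹, U ∈ L(X), and ‖T_{λ^m} − U‖ → 0 as m → ∞. Then for all natural numbers ℓ, k with 1 ≤ ℓ ≤ k: lim_{m→∞} λ_{k−ℓ+1}^m = x_ℓ*(U(x_{k+1})) · Π_{i=ℓ}^{k} wᵢ⁻¹; and for all ℓ > k: x_ℓ*(U(x_{k+1})) = 0. -/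
open Filter Topology
open scoped ENNReal

/-- (Indices are 0-based: `x n`, `xs n`, `w n` are the paper's `x_{n+1}`,
`x*_{n+1}`, `w_{n+1}`, and `lam m k` multiplies `B_w^{k+1}`.  The paper's claim for
`1 ≤ ℓ ≤ k` becomes `ℓ ≤ k` here: `limₘ lam m (k - ℓ) = xs ℓ (U (x (k+1))) · Π_{i=ℓ}^{k} (w i)⁻¹`,
and for `ℓ > k`: `xs ℓ (U (x (k+1))) = 0`.)  Suppose `‖T_{lam m} − U‖ → 0`. -/
theorem limit_coefficients_formula
    {𝕜 : Type*} [RCLike 𝕜] {X : Type*} [NormedAddCommGroup X] [NormedSpace 𝕜 X]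
    [CompleteSpace X]
    (x : ℕ → X) (xs : ℕ → X →L[𝕜] 𝕜) (C : ℝ)
    (hx : ∀ n, ‖x n‖ = 1)
    (hxs : ∀ n, ‖xs n‖ ≤ C)
    (hbi : ∀ m n, xs m (x n) = if m = n then 1 else 0)
    (hdense : Dense (Submodule.span 𝕜 (Set.range x) : Set X))
    (hsep : ∀ z : X, (∀ n, xs n z = 0) → z = 0)
    (w : ℕ → ℝ)
    (hw_pos : ∀ n, 0 < w n)
    (hw_anti : StrictAnti w)
    (hw_lim : Tendsto w atTop (nhds 0))
    (hw_sum : Summable w)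
    (hw_le : ∑' n, w n ≤ C⁻¹)
    (B : X →L[𝕜] X)
    (hB : ∀ z : X, B z = ∑' n : ℕ, ((w n : 𝕜) * xs (n + 1) z) • x n)
    (lam : ℕ → lp (fun _ : ℕ => 𝕜) 1)
    (U : X →L[𝕜] X)
    (hconv : Tendsto
      (fun m => ‖(∑' k : ℕ, (lam m k : 𝕜) • B ^ (k + 1)) - U‖) atTop (nhds 0)) :
    (∀ ℓ k : ℕ, ℓ ≤ k →
      Tendsto (fun m => (lam m (k - ℓ) : 𝕜)) atTop
        (nhds (xs ℓ (U (x (k + 1))) * ∏ i ∈ Finset.Icc ℓ k, ((w i : 𝕜))⁻¹))) ∧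
    ∀ ℓ k : ℕ, k < ℓ → xs ℓ (U (x (k + 1))) = 0 := by
  have hC : 0 < C := by
    by_contra h
    push Not at h
    have h0 : xs 0 = 0 := by
      have := (hxs 0).trans h
      simpa using this
    have h1 := hbi 0 0
    simp [h0] at h1
  have hbound : ∀ (z : X) (n : ℕ), ‖((w n : 𝕜) * xs (n + 1) z) • x n‖ ≤ w n * (C * ‖z‖) := by
    intro z n
    rw [norm_smul, hx, mul_one, norm_mul, RCLike.norm_ofReal, abs_of_pos (hw_pos n)]
    exact mul_le_mul_of_nonneg_left ((xs (n + 1)).le_of_opNorm_le (hxs _) z) (hw_pos n).le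
  have hsummz : ∀ z : X, Summable (fun n : ℕ => ((w n : 𝕜) * xs (n + 1) z) • x n) := fun z =>
    Summable.of_norm_bounded (hw_sum.mul_right _) (hbound z)
  have hBnorm : ‖B‖ ≤ 1 := by
    refine B.opNorm_le_bound zero_le_one fun z => ?_
    rw [hB]
    refine (tsum_of_norm_bounded (hw_sum.mul_right (C * ‖z‖)).hasSum (hbound z)).trans ?_
    rw [tsum_mul_right, ← mul_assoc]
    refine mul_le_mul_of_nonneg_right ?_ (norm_nonneg z)
    calc _ ≤ C⁻¹ * C := mul_le_mul_of_nonneg_right hw_le hC.le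
      _ = 1 := inv_mul_cancel₀ hC.ne'
  have hstep : ∀ (l : ℕ) (z : X), xs l (B z) = (w l : 𝕜) * xs (l + 1) z := by
    intro l z
    rw [hB, (xs l).map_tsum (hsummz z), tsum_eq_single l]
    · simp [hbi]
    · intro n hn
      simp [hbi, hn.symm]
  have hpow : ∀ (j l : ℕ) (z : X),
      xs l ((B ^ j) z) = (∏ i ∈ Finset.Ico l (l + j), (w i : 𝕜)) * xs (l + j) z := by
    intro j
    induction j with
    | zero => intro l z; simp
    | succ j ih =>
      intro l z
      rw [pow_succ, mul_apply_eq_comp, ih, hstep, ← add_assoc,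
        Finset.prod_Ico_succ_top (by omega), mul_assoc]
  have hTs : ∀ m, Summable (fun k : ℕ => (lam m k : 𝕜) • B ^ (k + 1)) := by
    intro m
    have h1 : Summable (fun k => ‖lam m k‖) := by
      simpa using (lp.memℓp (lam m)).summable (by simp)
    refine Summable.of_norm_bounded h1 fun k => ?_
    rw [norm_smul]
    refine mul_le_of_le_one_right (norm_nonneg _) ?_
    exact (norm_pow_le' B (Nat.succ_pos k)).trans (pow_le_one₀ (norm_nonneg _) hBnorm)
  have hcoef : ∀ m l k, xs l ((∑' k : ℕ, (lam m k : 𝕜) • B ^ (k + 1)) (x (k + 1))) =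
      ∑' j : ℕ, (lam m j : 𝕜) * ((∏ i ∈ Finset.Ico l (l + (j + 1)), (w i : 𝕜)) *
        if l + (j + 1) = k + 1 then 1 else 0) := by
    intro m l k
    have h := ((xs l).comp (ContinuousLinearMap.apply 𝕜 X (x (k + 1)))).map_tsum (hTs m)
    refine h.trans (tsum_congr fun j => ?_)
    change xs l ((lam m j : 𝕜) • (B ^ (j + 1)) (x (k + 1))) = _
    rw [map_smul, hpow, hbi, smul_eq_mul]
  have hT : Tendsto (fun m => ∑' k : ℕ, (lam m k : 𝕜) • B ^ (k + 1)) atTop (nhds U) :=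
    tendsto_iff_norm_sub_tendsto_zero.2 hconv
  have hlim : ∀ l k, Tendsto (fun m => xs l ((∑' k : ℕ, (lam m k : 𝕜) • B ^ (k + 1)) (x (k + 1))))
      atTop (nhds (xs l (U (x (k + 1))))) := by
    intro l k
    exact (((xs l).comp (ContinuousLinearMap.apply 𝕜 X (x (k + 1)))).continuous.tendsto U).comp hT
  refine ⟨fun l k hlk => ?_, fun l k hlk => ?_⟩
  · refine ((hlim l k).mul_const (∏ i ∈ Finset.Icc l k, ((w i : 𝕜))⁻¹)).congr fun m => ?_
    rw [hcoef, tsum_eq_single (k - l)]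
    · have e : l + (k - l + 1) = k + 1 := by omega
      have hI : Finset.Ico l (k + 1) = Finset.Icc l k := by ext; simp
      rw [e, if_pos rfl, mul_one, hI, mul_assoc, ← Finset.prod_mul_distrib,
        Finset.prod_eq_one, mul_one]
      intro i _
      exact mul_inv_cancel₀ (RCLike.ofReal_ne_zero.2 (hw_pos i).ne')
    · intro j hj
      rw [if_neg (by omega)]
      simp
  · refine tendsto_nhds_unique (hlim l k) (tendsto_const_nhds.congr fun m => ?_)
    rw [hcoef, eq_comm]
    convert tsum_zero with j
    rw [if_neg (by omega)]
    simp
end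

section
/- Every nonzero operator in the operator-norm closure of {T_λ : λ ∈ ℓ¹} ⊆ L(X) is supercyclic. That is, if U ∈ L(X), U ≠ 0, and there is a sequence (λ^m)ₘ ⊆ ℓ¹ with ‖T_{λ^m} − U‖ → 0, then there exists x ∈ X such that {c·Uᵏ(x) : c ∈ 𝕂, k ≥ 0} is dense in X. -/
open Filter Topology
open scoped ENNReal

theorem sc_of_dense_aux {𝕜 : Type*} [RCLike 𝕜] {X : Type*} [NormedAddCommGroup X] [NormedSpace 𝕜 X]
    [CompleteSpace X] [SecondCountableTopology X] (U : X →L[𝕜] X)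
    (h1 : Dense {z : X | ∃ n, ∀ k ≥ n, (U ^ k) z = 0})
    (h2 : ∀ k, Dense (Set.range (U ^ k : X →L[𝕜] X))) :
    ∃ z : X, Dense {y : X | ∃ (c : 𝕜) (k : ℕ), y = c • (U ^ k) z} := by
  have hb := TopologicalSpace.isBasis_countableBasis X
  have hc := TopologicalSpace.countable_countableBasis X
  let G : Set X → Set X := fun V => ⋃ (c : 𝕜) (k : ℕ), (fun z => c • (U ^ k) z) ⁻¹' V
  have hGo : ∀ V ∈ TopologicalSpace.countableBasis X, IsOpen (G V) := by
    intro V hV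
    refine isOpen_iUnion fun c => isOpen_iUnion fun k => ?_
    exact (hb.isOpen hV).preimage ((U ^ k).continuous.const_smul c)
  have hGd : ∀ V ∈ TopologicalSpace.countableBasis X, Dense (G V) := by
    intro V hV
    rw [dense_iff_inter_open]
    intro O hO hOn
    obtain ⟨u, huO, n, hu⟩ := h1.inter_open_nonempty O hO hOn
    obtain ⟨y, hyV, v, rfl⟩ := (h2 n).inter_open_nonempty V (hb.isOpen hV)
      (TopologicalSpace.nonempty_of_mem_countableBasis hV)
    have hcont : Continuous fun e : 𝕜 => u + e • v := by fun_prop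
    have hnh : ∀ᶠ e in 𝓝[≠] (0 : 𝕜), u + e • v ∈ O :=
      (hcont.continuousAt.eventually (hO.mem_nhds (by simpa using huO))).filter_mono
        nhdsWithin_le_nhds
    obtain ⟨e, he, hne⟩ := (hnh.and self_mem_nhdsWithin).exists
    have hne' : e ≠ 0 := hne
    refine ⟨u + e • v, he, ?_⟩
    simp only [G, Set.mem_iUnion, Set.mem_preimage]
    refine ⟨e⁻¹, n, ?_⟩
    rw [map_add, hu n le_rfl, map_smul, zero_add, smul_smul, inv_mul_cancel₀ hne', one_smul]
    exact hyV
  obtain ⟨z, hz⟩ := (dense_biInter_of_isOpen hGo hc hGd).nonempty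
  refine ⟨z, hb.dense_iff.2 ?_⟩
  intro V hV _
  have := Set.mem_iInter₂.1 hz V hV
  simp only [G, Set.mem_iUnion, Set.mem_preimage] at this
  obtain ⟨c, k, h⟩ := this
  exact ⟨_, h, c, k, rfl⟩

theorem shift_aux {𝕜 : Type*} [RCLike 𝕜] {X : Type*} [NormedAddCommGroup X] [NormedSpace 𝕜 X]
    [CompleteSpace X] (x : ℕ → X) (hx0 : x 0 ≠ 0)
    (hdense : Dense (Submodule.span 𝕜 (Set.range x) : Set X))
    (w : ℕ → 𝕜) (hw : ∀ n, w n ≠ 0) (B : X →L[𝕜] X) (hB0 : B (x 0) = 0)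
    (hBs : ∀ n, B (x (n + 1)) = w n • x n)
    (hker : ∀ z, B z = 0 → ∃ t : 𝕜, z = t • x 0)
    (U : X →L[𝕜] X) (hU : U ≠ 0) (hcomm : U * B = B * U) (hU0 : U (x 0) = 0) :
    ∃ z : X, Dense {y : X | ∃ (c : 𝕜) (k : ℕ), y = c • (U ^ k) z} := by
  have hcz : ∀ z, U (B z) = B (U z) := fun z => DFunLike.congr_fun hcomm z
  have hcn : ∀ n z, U ((B ^ n) z) = (B ^ n) (U z) := by
    intro n z
    have : Commute U (B ^ n) := (show Commute U B from hcomm).pow_right n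
    exact DFunLike.congr_fun this.eq z
  have : SecondCountableTopology X := by
    have : TopologicalSpace.SeparableSpace X := by
      rw [← TopologicalSpace.isSeparable_univ_iff, ← hdense.closure_eq]
      exact ((Set.countable_range x).isSeparable.span (R := 𝕜)).closure
    exact UniformSpace.secondCountable_of_separable X
  have hmono : ∀ (T : X →L[𝕜] X) n k z, n ≤ k → (T ^ n) z = 0 → (T ^ k) z = 0 := by
    intro T n k z hk h
    obtain ⟨j, rfl⟩ := Nat.exists_eq_add_of_le' hk
    rw [pow_add, ContinuousLinearMap.mul_apply, h, map_zero]
  have hBx : ∀ n, (B ^ (n + 1)) (x n) = 0 := by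
    intro n
    induction n with
    | zero => simpa using hB0
    | succ n ih =>
      rw [pow_succ, ContinuousLinearMap.mul_apply, hBs, map_smul, ih, smul_zero]
  have hBspan : ∀ z ∈ Submodule.span 𝕜 (Set.range x), ∃ n, (B ^ n) z = 0 := by
    intro z hz
    induction hz using Submodule.span_induction with
    | mem y hy => obtain ⟨n, rfl⟩ := hy; exact ⟨n + 1, hBx n⟩
    | zero => exact ⟨0, by simp⟩
    | add a b _ _ ha hb =>
      obtain ⟨n, hn⟩ := ha
      obtain ⟨m, hm⟩ := hb
      refine ⟨max n m, ?_⟩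
      rw [map_add, hmono B n _ a (le_max_left _ _) hn, hmono B m _ b (le_max_right _ _) hm, add_zero]
    | smul c a _ ha => obtain ⟨n, hn⟩ := ha; exact ⟨n, by rw [map_smul, hn, smul_zero]⟩
  have hUker : ∀ n z, (B ^ n) z = 0 → (U ^ n) z = 0 := by
    intro n
    induction n with
    | zero => intro z h; simpa using h
    | succ n ih =>
      intro z h
      rw [pow_succ', ContinuousLinearMap.mul_apply] at h
      obtain ⟨t, ht⟩ := hker _ h
      rw [pow_succ, ContinuousLinearMap.mul_apply]
      apply ih
      rw [← hcn, ht, map_smul, hU0, smul_zero]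
  -- the least index not killed
  have hex : ∃ p, U (x p) ≠ 0 := by
    by_contra! hcon
    apply hU
    refine ContinuousLinearMap.ext_on hdense ?_
    rintro _ ⟨n, rfl⟩
    simpa using hcon n
  classical
  let p := Nat.find hex
  have hp : U (x p) ≠ 0 := Nat.find_spec hex
  have hpm : ∀ m < p, U (x m) = 0 := fun m hm => not_not.1 (Nat.find_min hex hm)
  have hBU : B (U (x p)) = 0 := by
    rw [← hcz]
    rcases hq : p with _ | q
    · rw [hB0, map_zero]
    · rw [hBs, map_smul, hpm q (by omega), smul_zero]
  obtain ⟨d, hd⟩ := hker _ hBU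
  have hd0 : d ≠ 0 := by
    rintro rfl
    exact hp (by rw [hd, zero_smul])
  have hBpn : ∀ n, ∃ c : 𝕜, c ≠ 0 ∧ (B ^ n) (x (p + n)) = c • x p := by
    intro n
    induction n with
    | zero => exact ⟨1, one_ne_zero, by simp⟩
    | succ n ih =>
      obtain ⟨c, hc, h⟩ := ih
      refine ⟨w (p + n) * c, mul_ne_zero (hw _) hc, ?_⟩
      rw [pow_succ, ContinuousLinearMap.mul_apply, ← add_assoc, hBs, map_smul, h, smul_smul]
  have hrange : ∀ n z, (B ^ n) z = 0 → ∃ y, U y = z := by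
    intro n
    induction n with
    | zero => intro z h; exact ⟨0, by simpa using h.symm⟩
    | succ n ih =>
      intro z h
      rw [pow_succ', ContinuousLinearMap.mul_apply] at h
      obtain ⟨t, ht⟩ := hker _ h
      obtain ⟨c, hc, hcx⟩ := hBpn n
      obtain ⟨y, hy⟩ := ih (z - (t * (c * d)⁻¹) • U (x (p + n))) (by
        rw [map_sub, map_smul, ← hcn, hcx, map_smul, hd, ht, smul_smul, smul_smul,
          mul_assoc _ c d, inv_mul_cancel_right₀ (mul_ne_zero hc hd0), sub_self])
      refine ⟨y + (t * (c * d)⁻¹) • x (p + n), ?_⟩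
      rw [map_add, map_smul, hy, sub_add_cancel]
  have hdr : DenseRange U := by
    refine hdense.mono fun z hz => ?_
    obtain ⟨n, hn⟩ := hBspan z hz
    exact hrange n z hn
  apply sc_of_dense_aux U
  · refine hdense.mono fun z hz => ?_
    obtain ⟨n, hn⟩ := hBspan z hz
    exact ⟨n, fun k hk => hmono U n k z hk (hUker n z hn)⟩
  · intro k
    induction k with
    | zero => 
      have : Set.range ((U ^ 0 : X →L[𝕜] X)) = Set.univ := 
        Set.eq_univ_of_forall fun z => ⟨z, by simp⟩
      rw [this]; exact dense_univ
    | succ k ih =>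
      have h : DenseRange ((U ^ k : X →L[𝕜] X) ∘ U) :=
        DenseRange.comp (show DenseRange (U ^ k : X →L[𝕜] X) from ih) hdr (U ^ k).continuous
      rw [pow_succ]
      exact h

/-- (Indices are 0-based: `T_f = Σₖ f k • B_w^{k+1}`, matching the paper's
`Σ_{k ≥ 1} λ_k B_w^k`.)  Every nonzero operator `U` in the operator-norm closure of
`{T_f : f ∈ ℓ¹}` is supercyclic: there is `z ∈ X` such that `{c • Uᵏ z : c ∈ 𝕜, k ≥ 0}` is
dense in `X`. -/
theorem closure_of_range_supercyclic
    {𝕜 : Type*} [RCLike 𝕜] {X : Type*} [NormedAddCommGroup X] [NormedSpace 𝕜 X]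
    [CompleteSpace X]
    (x : ℕ → X) (xs : ℕ → X →L[𝕜] 𝕜) (C : ℝ)
    (hx : ∀ n, ‖x n‖ = 1)
    (hxs : ∀ n, ‖xs n‖ ≤ C)
    (hbi : ∀ m n, xs m (x n) = if m = n then 1 else 0)
    (hdense : Dense (Submodule.span 𝕜 (Set.range x) : Set X))
    (hsep : ∀ z : X, (∀ n, xs n z = 0) → z = 0)
    (w : ℕ → ℝ)
    (hw_pos : ∀ n, 0 < w n)
    (hw_anti : StrictAnti w)
    (hw_lim : Tendsto w atTop (nhds 0))
    (hw_sum : Summable w)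
    (hw_le : ∑' n, w n ≤ C⁻¹)
    (B : X →L[𝕜] X)
    (hB : ∀ z : X, B z = ∑' n : ℕ, ((w n : 𝕜) * xs (n + 1) z) • x n)
    (U : X →L[𝕜] X) (hU : U ≠ 0)
    (lam : ℕ → lp (fun _ : ℕ => 𝕜) 1)
    (hconv : Tendsto
      (fun m => ‖(∑' k : ℕ, (lam m k : 𝕜) • B ^ (k + 1)) - U‖) atTop (nhds 0)) :
    ∃ z : X, Dense {y : X | ∃ (c : 𝕜) (k : ℕ), y = c • (U ^ k) z} := by
  have hsum : ∀ z, Summable fun n : ℕ => ((w n : 𝕜) * xs (n + 1) z) • x n := by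
    intro z
    refine Summable.of_norm_bounded (hw_sum.mul_right (C * ‖z‖)) fun n => ?_
    rw [norm_smul, hx, mul_one, norm_mul, RCLike.norm_ofReal, abs_of_pos (hw_pos n)]
    exact mul_le_mul_of_nonneg_left ((xs (n + 1)).le_of_opNorm_le (hxs _) z) (hw_pos n).le
  have hcoef : ∀ m z, xs m (B z) = (w m : 𝕜) * xs (m + 1) z := by
    intro m z
    rw [hB, (xs m).map_tsum (hsum z), tsum_eq_single m]
    · simp [hbi]
    · intro n hn
      simp [hbi, hn.symm]
  have hwne : ∀ n, (w n : 𝕜) ≠ 0 := fun n => by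
    exact_mod_cast (hw_pos n).ne'
  have hext : ∀ a b : X, (∀ n, xs n a = xs n b) → a = b := fun a b h =>
    sub_eq_zero.1 (hsep _ fun n => by rw [map_sub, h, sub_self])
  have hB0 : B (x 0) = 0 := hext _ _ fun n => by simp [hcoef, hbi]
  have hBs : ∀ n, B (x (n + 1)) = (w n : 𝕜) • x n := fun n => hext _ _ fun m => by
    rw [hcoef, map_smul, hbi, hbi]
    by_cases h : m = n <;> simp [h]
  have hker : ∀ z, B z = 0 → ∃ t : 𝕜, z = t • x 0 := by
    intro z hz
    refine ⟨xs 0 z, hext _ _ fun m => ?_⟩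
    rcases m with _ | m
    · simp [hbi]
    · have h := hcoef m z
      rw [hz, map_zero] at h
      have h' := (mul_eq_zero.1 h.symm).resolve_left (hwne m)
      simp [h', hbi]
  let M : Submodule 𝕜 (X →L[𝕜] X) :=
    { carrier := {T | T * B = B * T ∧ T (x 0) = 0}
      add_mem' := fun {a b} ha hb => ⟨by rw [add_mul, mul_add, ha.1, hb.1], by
        rw [ContinuousLinearMap.add_apply, ha.2, hb.2, add_zero]⟩
      zero_mem' := ⟨by simp, by simp⟩
      smul_mem' := fun c a ha => ⟨by rw [smul_mul_assoc, mul_smul_comm, ha.1], by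
        rw [ContinuousLinearMap.smul_apply, ha.2, smul_zero]⟩ }
  have hMc : IsClosed (M : Set (X →L[𝕜] X)) := by
    refine IsClosed.inter ?_ ?_
    · exact isClosed_eq (continuous_id.mul continuous_const) (continuous_const.mul continuous_id)
    · exact isClosed_eq (by fun_prop) continuous_const
  have hT : ∀ m, (∑' k : ℕ, (lam m k : 𝕜) • B ^ (k + 1)) ∈ M := by
    intro m
    have hk : ∀ k : ℕ, (lam m k : 𝕜) • B ^ (k + 1) ∈ M := fun k =>
      M.smul_mem _ ⟨((Commute.refl B).pow_left _).eq, by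
        rw [pow_succ, ContinuousLinearMap.mul_apply, hB0, map_zero]⟩
    by_cases hs : Summable fun k : ℕ => (lam m k : 𝕜) • B ^ (k + 1)
    · exact hMc.mem_of_tendsto hs.hasSum (Eventually.of_forall fun s => M.sum_mem fun k _ => hk k)
    · rw [tsum_eq_zero_of_not_summable hs]
      exact M.zero_mem
  have hUM : U ∈ M := hMc.mem_of_tendsto (tendsto_iff_norm_sub_tendsto_zero.2 hconv)
    (Eventually.of_forall hT)
  exact shift_aux x (fun h => by simpa [h] using hx 0) hdense (fun n => (w n : 𝕜)) hwne B hB0 hBs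
    hker U hU hUM.1 hUM.2
end

section
/- The continuous linear operator A : ℓ¹ → ℓ¹ defined by A((λ₁, λ₂, λ₃, λ₄, …)) = (0, λ₃, λ₄, λ₅, …) is not supercyclic: for no x ∈ ℓ¹ is the set {c·Aᵏ(x) : c ∈ 𝕂, k ≥ 0} dense in ℓ¹. -/
open Filter Topology
open scoped ENNReal

/-- (Coordinates are 0-based: the paper's operator
`(λ₁, λ₂, λ₃, λ₄, …) ↦ (0, λ₃, λ₄, λ₅, …)` satisfies `(A f) 0 = 0` and
`(A f) n = f (n + 1)` for `n ≥ 1`.)  This operator `A ∈ L(ℓ¹)` is not supercyclic: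
for no `y ∈ ℓ¹` is the set `{c • Aᵏ y : c ∈ 𝕜, k ≥ 0}` dense in `ℓ¹`. -/
theorem shifted_backward_shift_not_supercyclic {𝕜 : Type*} [RCLike 𝕜]
    (A : lp (fun _ : ℕ => 𝕜) 1 →L[𝕜] lp (fun _ : ℕ => 𝕜) 1)
    (hA0 : ∀ f : lp (fun _ : ℕ => 𝕜) 1, A f 0 = 0)
    (hA : ∀ f : lp (fun _ : ℕ => 𝕜) 1, ∀ n : ℕ, 1 ≤ n → A f n = f (n + 1)) :
    ¬ ∃ y : lp (fun _ : ℕ => 𝕜) 1,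
        Dense {z : lp (fun _ : ℕ => 𝕜) 1 | ∃ (c : 𝕜) (k : ℕ), z = c • (A ^ k) y} := by
  rintro ⟨y, hy⟩
  have hc : ∀ i : ℕ, Continuous (fun z : lp (fun _ : ℕ => 𝕜) 1 => z i) := fun i =>
    (lp.evalCLM 𝕜 (fun _ : ℕ => 𝕜) 1 i).continuous
  have key : ∀ F : lp (fun _ : ℕ => 𝕜) 1 → 𝕜, Continuous F →
      (∀ (c : 𝕜) (k : ℕ), F (c • (A ^ k) y) = 0) → ∀ z, F z = 0 := by
    intro F hF h z
    have := Continuous.ext_on hy hF (continuous_const (y := (0 : 𝕜))) (by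
      rintro _ ⟨c, k, rfl⟩
      exact h c k)
    exact congrFun this z
  have hk : ∀ k : ℕ, ((A ^ (k + 1)) y) 0 = 0 := by
    intro k
    rw [pow_succ']
    exact hA0 _
  have h1 := key (fun z => z 0 * (z 0 * y 1 - z 1 * y 0))
    ((hc 0).mul (((hc 0).mul continuous_const).sub ((hc 1).mul continuous_const))) (by
      intro c k
      cases k with
      | zero => simp; right; ring
      | succ k => have := hk k; generalize (A ^ (k + 1)) y = w at *; simp [this])
  have e1 := h1 (lp.single 1 0 (1 : 𝕜))
  have e2 := h1 (lp.single 1 0 (1 : 𝕜) + lp.single 1 1 (1 : 𝕜))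
  simp [lp.single_apply] at e1
  simp [lp.single_apply, e1] at e2
  have h2 := key (fun z => z 0) (hc 0) (by
      intro c k
      cases k with
      | zero => simp [e2]
      | succ k => have := hk k; generalize (A ^ (k + 1)) y = w at *; simp [this]) (lp.single 1 0 (1 : 𝕜))
  simp at h2
end
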